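/- For all real numbers 0 < p ≤ q ≤ ∞ and every integer m ≥ 0, there exist constants c, C > 0 depending only on p, q, m such that for all integers n, k with 1 ≤ k ≤ n and 2m ≤ k, one has c · (n²/k)^{m + 1/p − 1/q} ≤ M_{q,p}^{(k)}(n, m) ≤ C · (n²/k)^{m + 1/p − 1/q} (with the convention 1/∞ = 0). -/

import Mathlib

open Polynomial MeasureTheory

/-- The `L_q` quasinorm of `f` on `[a,b]` for `0 < q < ∞`. -/
noncomputable def LqNorm (f : ℝ → ℝ) (q a b : ℝ) : ℝ :=
  (∫ x in a..b, |f x| ^ q) ^ (1 / q)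

/-- The sup norm of `f` on `[a,b]`. -/
noncomputable def LinfNorm (f : ℝ → ℝ) (a b : ℝ) : ℝ :=
  sSup ((fun x => |f x|) '' Set.Icc a b)

/-- The `L_q` norm on `[a,b]` for `0 < q ≤ ∞`, `q : ℝ≥0∞`. -/
noncomputable def Lnorm (f : ℝ → ℝ) (q : ENNReal) (a b : ℝ) : ℝ :=
  if q = ⊤ then LinfNorm f a b else LqNorm f q.toReal a b

/-- `P ∈ Δ_n^(k)`: a real polynomial of degree at most `n` all of whose derivatives of
order `0 ≤ m ≤ k` are nonnegative on `[-1,1]`. -/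
def AbsMono (P : Polynomial ℝ) (n k : ℕ) : Prop :=
  P.natDegree ≤ n ∧
    ∀ m ≤ k, ∀ x ∈ Set.Icc (-1 : ℝ) 1, 0 ≤ (derivative^[m] P).eval x

/-- The constrained Markov–Nikolskii constant
`M_{q,p}^{(k)}(n,m) = sup { ‖P^{(m)}‖_q / ‖P‖_p : P ∈ Δ_n^{(k)}, ‖P‖_p > 0 }`. -/
noncomputable def Mconstr (q p : ENNReal) (n k m : ℕ) : ℝ :=
  sSup {r : ℝ | ∃ P : Polynomial ℝ, AbsMono P n k ∧
    0 < Lnorm (fun x => P.eval x) p (-1) 1 ∧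
    r = Lnorm (fun x => (derivative^[m] P).eval x) q (-1) 1 /
          Lnorm (fun x => P.eval x) p (-1) 1}

/-!
Upper bound. By Taylor's formula at `0` with integral remainder, the polynomial part of `P'(1)` is
at most `k` times that of `P(1)`, and the remainders are consecutive moments `∫ (1 - s) ^ j R` of
`R = P^(k) ≥ 0`, with `j = k - 2` and `j = k - 1`. By Lukács' theorem `R` is a sum of Jacobi weights
times squares, and on each such term a Hardy-type inequality together with the Bernstein inequality
in weighted `L₂` compares the two moments with constant of order `(n / k)²`. This gives Markov's
inequality `P'(1) ≤ C (n² / k) P(1)`, and by rescaling the same inequality at the points of `[0,1]`.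
It can be iterated `m` times, because the order of absolute monotonicity stays at least `k / 2`.
Applied to the antiderivative of a power of `P` it bounds `P(1)` by the `L_p` norm of `P`, which
compares the norms for different exponents.

Lower bound. The moment comparison is reversed for an even power of the Fejér kernel
`(1 - T_M(1 - 2s)) / s` with `M` of order `n / k`. Its iterated antiderivative is therefore an
absolutely monotone polynomial which is peaked at `1` on the scale `k / n²`. When `n` is of order
`k`, the polynomial `(1 + x) ^ n` already has this property, and exponents `p < 1` are handled by
powers of the peaked polynomial.
-/

/-! ### Integration of polynomials over the unit interval -/

/-- Integration over `[0,1]` as a linear functional on real polynomials. -/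
noncomputable def unitIntegral : ℝ[X] →ₗ[ℝ] ℝ where
  toFun f := ∫ s in (0 : ℝ)..1, f.eval s
  map_add' f g := by
    simp only [eval_add]
    exact intervalIntegral.integral_add (f.continuous.intervalIntegrable _ _)
      (g.continuous.intervalIntegrable _ _)
  map_smul' c f := by simp

theorem unitIntegral_apply (f : ℝ[X]) : unitIntegral f = ∫ s in (0 : ℝ)..1, f.eval s := rfl

theorem integral_eval_derivative (f : ℝ[X]) (a b : ℝ) :
    ∫ x in a..b, (derivative f).eval x = f.eval b - f.eval a :=
  intervalIntegral.integral_eq_sub_of_hasDerivAt (fun x _ => f.hasDerivAt x)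
    ((derivative f).continuous.intervalIntegrable _ _)

theorem unitIntegral_derivative (f : ℝ[X]) :
    unitIntegral (derivative f) = f.eval 1 - f.eval 0 :=
  integral_eval_derivative f 0 1

theorem unitIntegral_comp_one_sub_X (f : ℝ[X]) :
    unitIntegral (f.comp (1 - X)) = unitIntegral f := by
  simp only [unitIntegral_apply, eval_comp, eval_sub, eval_one, eval_X]
  rw [intervalIntegral.integral_comp_sub_left (fun s => f.eval s) 1]
  simp

theorem unitIntegral_nonneg {f : ℝ[X]} (h : ∀ s ∈ Set.Ioo (0 : ℝ) 1, 0 ≤ f.eval s) :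
    0 ≤ unitIntegral f := by
  simpa [unitIntegral_apply] using intervalIntegral.integral_mono_on_of_le_Ioo zero_le_one
    (continuous_const.intervalIntegrable _ _) (f.continuous.intervalIntegrable _ _) h

theorem unitIntegral_one_sub_X_pow_mul_derivative (j : ℕ) (f : ℝ[X]) :
    unitIntegral ((1 - X) ^ (j + 1) * derivative f) =
      (j + 1) * unitIntegral ((1 - X) ^ j * f) - f.eval 0 := by
  have hderiv : derivative ((1 - X) ^ (j + 1) * f) =
      (1 - X) ^ (j + 1) * derivative f - ((j : ℝ) + 1) • ((1 - X) ^ j * f) := by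
    simp only [derivative_mul, derivative_pow, derivative_sub, derivative_one, derivative_X,
      Nat.add_sub_cancel, C_add, C_1, Nat.cast_add, Nat.cast_one, map_natCast, smul_eq_C_mul]
    ring
  have hparts := unitIntegral_derivative ((1 - X) ^ (j + 1) * f)
  rw [hderiv, map_sub, map_smul, smul_eq_mul] at hparts
  simp only [eval_mul, eval_pow, eval_sub, eval_one, eval_X, sub_self, sub_zero, one_pow, one_mul,
    ne_eq, Nat.succ_ne_zero, not_false_eq_true, zero_pow, zero_mul, zero_sub] at hparts
  linarith

theorem eval_one_eq_sum_add_unitIntegral (f : ℝ[X]) (j : ℕ) :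
    f.eval 1 = ∑ i ∈ Finset.range (j + 1), (derivative^[i] f).eval 0 / i.factorial +
      unitIntegral ((1 - X) ^ j * derivative^[j + 1] f) / j.factorial := by
  induction j with
  | zero => simp [unitIntegral_derivative]
  | succ j ih =>
    rw [ih, Finset.sum_range_succ _ (j + 1), Function.iterate_succ_apply' _ (j + 1),
      unitIntegral_one_sub_X_pow_mul_derivative, Nat.factorial_succ]
    push_cast
    field_simp
    ring

/-! ### The Bernstein inequality for Jacobi weights -/

/-- The Jacobi weight `s ^ a * (1 - s) ^ b` of the interval `[0,1]`. -/
noncomputable def jacobiWeight (a b : ℕ) : ℝ[X] := X ^ a * (1 - X) ^ b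

/-- The squared norm of `f` in the weighted `L₂` space on `[0,1]` of `jacobiWeight a b`. -/
noncomputable def jacobiNormSq (a b : ℕ) (f : ℝ[X]) : ℝ :=
  unitIntegral (jacobiWeight a b * f ^ 2)

/-- The Jacobi differential operator, which is symmetric for the weight `jacobiWeight a b`; the
sign makes it positive. -/
noncomputable def jacobiOp (a b : ℕ) (f : ℝ[X]) : ℝ[X] :=
  -(X * (1 - X) * derivative (derivative f) +
    (C ((a : ℝ) + 1) - C ((a : ℝ) + b + 2) * X) * derivative f)

theorem eval_jacobiWeight_nonneg (a b : ℕ) {s : ℝ} (hs : s ∈ Set.Ioo (0 : ℝ) 1) :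
    0 ≤ (jacobiWeight a b).eval s := by
  have hs0 : 0 ≤ s := hs.1.le
  have hs1 : 0 ≤ 1 - s := sub_nonneg.2 hs.2.le
  simp only [jacobiWeight, eval_mul, eval_pow, eval_X, eval_sub, eval_one]
  positivity

theorem eval_jacobiWeight_mul_sq_nonneg (a b : ℕ) (f : ℝ[X]) {s : ℝ}
    (hs : s ∈ Set.Ioo (0 : ℝ) 1) : 0 ≤ (jacobiWeight a b * f ^ 2).eval s := by
  rw [eval_mul, eval_pow]
  exact mul_nonneg (eval_jacobiWeight_nonneg a b hs) (sq_nonneg _)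

theorem jacobiNormSq_nonneg (a b : ℕ) (f : ℝ[X]) : 0 ≤ jacobiNormSq a b f :=
  unitIntegral_nonneg fun _ hs => eval_jacobiWeight_mul_sq_nonneg a b f hs

theorem jacobiNormSq_eq_add (a b : ℕ) (f : ℝ[X]) :
    jacobiNormSq a b f = jacobiNormSq (a + 1) b f + jacobiNormSq a (b + 1) f := by
  simp only [jacobiNormSq, ← map_add, jacobiWeight]
  congr 1
  ring

theorem derivative_jacobiOp (a b : ℕ) (f : ℝ[X]) :
    derivative (jacobiOp a b f) =
      jacobiOp (a + 1) (b + 1) (derivative f) + ((a : ℝ) + b + 2) • derivative f := by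
  simp only [jacobiOp, derivative_neg, derivative_add, derivative_sub, derivative_mul,
    derivative_C, derivative_X, derivative_one]
  simp only [smul_eq_C_mul, C_add, C_1, C_ofNat, Nat.cast_add, Nat.cast_one]
  ring

theorem unitIntegral_jacobiWeight_mul_jacobiOp (a b : ℕ) (f g : ℝ[X]) :
    unitIntegral (jacobiWeight a b * jacobiOp a b f * g) =
      unitIntegral (jacobiWeight (a + 1) (b + 1) * derivative f * derivative g) := by
  have hderiv : derivative (jacobiWeight (a + 1) (b + 1) * derivative f * g) =
      jacobiWeight (a + 1) (b + 1) * derivative f * derivative g -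
        jacobiWeight a b * jacobiOp a b f * g := by
    simp only [jacobiWeight, jacobiOp, derivative_mul, derivative_pow,
      derivative_sub, derivative_one, derivative_X, Nat.add_sub_cancel, C_add, C_ofNat, C_1,
      Nat.cast_add, Nat.cast_one, map_natCast]
    ring
  have hzero (x : ℝ) (hx : x * (1 - x) = 0) :
      (jacobiWeight (a + 1) (b + 1) * derivative f * g).eval x = 0 := by
    simp only [jacobiWeight, eval_mul, eval_pow, eval_X, eval_sub, eval_one]
    linear_combination x ^ a * (1 - x) ^ b * eval x (derivative f) * eval x g * hx
  have hparts := unitIntegral_derivative (jacobiWeight (a + 1) (b + 1) * derivative f * g)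
  rw [hderiv, map_sub, hzero 1 (by simp), hzero 0 (by simp)] at hparts
  linarith

theorem jacobiNormSq_jacobiOp (a b : ℕ) (f : ℝ[X]) :
    jacobiNormSq a b (jacobiOp a b f) =
      jacobiNormSq (a + 2) (b + 2) (derivative (derivative f)) +
        (a + b + 2) * jacobiNormSq (a + 1) (b + 1) (derivative f) := by
  have hself :=
    unitIntegral_jacobiWeight_mul_jacobiOp (a + 1) (b + 1) (derivative f) (derivative f)
  calc jacobiNormSq a b (jacobiOp a b f)
      = unitIntegral (jacobiWeight (a + 1) (b + 1) * derivative f *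
          derivative (jacobiOp a b f)) := by
        rw [← unitIntegral_jacobiWeight_mul_jacobiOp, jacobiNormSq, sq, mul_assoc]
    _ = unitIntegral
          (jacobiWeight (a + 1) (b + 1) * jacobiOp (a + 1) (b + 1) (derivative f) * derivative f +
            ((a : ℝ) + b + 2) • (jacobiWeight (a + 1) (b + 1) * derivative f ^ 2)) := by
        rw [derivative_jacobiOp, mul_add, mul_smul_comm]
        congr 2
        · ring
        · rw [sq, mul_assoc]
    _ = _ := by
        rw [map_add, map_smul, hself, smul_eq_mul, jacobiNormSq, jacobiNormSq, mul_assoc, ← sq]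

/-- Passing to the derivative raises both exponents and lowers the degree, so the bound for `f'`
controls `‖L f‖²` through `jacobiNormSq_jacobiOp`; expanding `0 ≤ ‖L f - lam f‖²`, where `lam` is
the eigenvalue of `L` in the top degree, then gives the bound for `f`. -/
theorem jacobiNormSq_derivative_le {f : ℝ[X]} {d : ℕ} (hf : f.natDegree ≤ d) (a b : ℕ) :
    jacobiNormSq (a + 1) (b + 1) (derivative f) ≤
      d * (d + a + b + 1) * jacobiNormSq a b f := by
  induction d generalizing a b f with
  | zero =>
    rw [eq_C_of_natDegree_le_zero hf]
    simp [jacobiNormSq]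
  | succ d ih =>
    set lam : ℝ := (d + 1) * (d + 1 + a + b + 1)
    have hlam_pos : 0 < lam := by positivity
    have hderiv := ih ((natDegree_derivative_le f).trans (Nat.sub_le_iff_le_add.2 hf))
      (a + 1) (b + 1)
    have hexpand : jacobiNormSq a b (jacobiOp a b f - lam • f) =
        jacobiNormSq a b (jacobiOp a b f) -
          2 * lam * jacobiNormSq (a + 1) (b + 1) (derivative f) + lam ^ 2 * jacobiNormSq a b f := by
      have hself := unitIntegral_jacobiWeight_mul_jacobiOp a b f f
      rw [mul_assoc _ (derivative f), ← sq] at hself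
      simp only [jacobiNormSq]
      rw [← hself]
      simp only [← smul_eq_mul, ← map_smul, ← map_sub, ← map_add]
      congr 1
      simp only [smul_eq_C_mul, smul_eq_mul, C_mul, C_pow, C_ofNat]
      ring
    have hLf : jacobiNormSq a b (jacobiOp a b f) ≤
        lam * jacobiNormSq (a + 1) (b + 1) (derivative f) := by
      rw [jacobiNormSq_jacobiOp]
      push_cast at hderiv
      linear_combination hderiv
    have hnonneg := jacobiNormSq_nonneg a b (jacobiOp a b f - lam • f)
    push_cast
    refine le_of_mul_le_mul_left ?_ hlam_pos
    linear_combination hnonneg + hexpand + hLf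

/-! ### Lukács' representation of polynomials nonnegative on the unit interval -/

/-- The cone generated by the products of a Jacobi weight and a square whose formal degree is at
most `N`. -/
noncomputable def lukacsCone (N : ℕ) : AddSubmonoid ℝ[X] :=
  AddSubmonoid.closure
    {f | ∃ (i j : ℕ) (Q : ℝ[X]), f = jacobiWeight i j * Q ^ 2 ∧ i + j + 2 * Q.natDegree ≤ N}

theorem jacobiWeight_mul_sq_mem_lukacsCone {i j N : ℕ} {Q : ℝ[X]}
    (h : i + j + 2 * Q.natDegree ≤ N) : jacobiWeight i j * Q ^ 2 ∈ lukacsCone N :=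
  AddSubmonoid.subset_closure ⟨i, j, Q, rfl, h⟩

theorem sq_mem_lukacsCone {N : ℕ} {Q : ℝ[X]} (h : 2 * Q.natDegree ≤ N) : Q ^ 2 ∈ lukacsCone N := by
  simpa [jacobiWeight] using jacobiWeight_mul_sq_mem_lukacsCone (i := 0) (j := 0) (by simpa using h)

theorem C_mem_lukacsCone {c : ℝ} (hc : 0 ≤ c) (N : ℕ) : C c ∈ lukacsCone N := by
  rw [← Real.sq_sqrt hc, C_pow]
  exact sq_mem_lukacsCone (by simp)

open scoped Pointwise in
theorem mul_mem_lukacsCone {M N : ℕ} {f g : ℝ[X]} (hf : f ∈ lukacsCone M)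
    (hg : g ∈ lukacsCone N) : f * g ∈ lukacsCone (M + N) := by
  have hfg := AddSubmonoid.mul_mem_mul hf hg
  rw [lukacsCone, lukacsCone, AddSubmonoid.closure_mul_closure] at hfg
  refine AddSubmonoid.closure_mono ?_ hfg
  rintro _ ⟨_, ⟨i, j, Q, rfl, hQ⟩, _, ⟨i', j', Q', rfl, hQ'⟩, rfl⟩
  refine ⟨i + i', j + j', Q * Q', ?_, ?_⟩
  · simp only [jacobiWeight]
    ring
  · have := natDegree_mul_le (p := Q) (q := Q')
    omega

theorem eval_nonneg_of_mem_lukacsCone {N : ℕ} {f : ℝ[X]} (hf : f ∈ lukacsCone N) :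
    ∀ s ∈ Set.Ioo (0 : ℝ) 1, 0 ≤ f.eval s := by
  induction hf using AddSubmonoid.closure_induction with
  | mem _ hx =>
    obtain ⟨i, j, Q, rfl, -⟩ := hx
    exact fun s hs => eval_jacobiWeight_mul_sq_nonneg i j Q hs
  | zero => simp
  | add _ _ _ _ hf hg => exact fun s hs => by simpa using add_nonneg (hf s hs) (hg s hs)

theorem eval_nonneg_of_eval_mul_nonneg {F S : ℝ[X]} {U : Set ℝ} (hU : IsOpen U) (hF0 : F ≠ 0)
    (hF : ∀ s ∈ U, 0 ≤ F.eval s) (hFS : ∀ s ∈ U, 0 ≤ (F * S).eval s) :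
    ∀ s ∈ U, 0 ≤ S.eval s := by
  intro s hs
  by_contra! hneg
  have hnhds : U ∩ {t | S.eval t < 0} ∈ nhds s :=
    (hU.inter (isOpen_lt S.continuous continuous_const)).mem_nhds ⟨hs, hneg⟩
  refine hF0 (F.eq_zero_of_infinite_isRoot ((infinite_of_mem_nhds s hnhds).mono ?_))
  rintro t ⟨ht, hSt⟩
  exact le_antisymm (nonpos_of_mul_nonneg_left (by simpa using hFS t ht) hSt) (hF t ht)

theorem sq_X_sub_C_dvd_of_isLocalMin {R : ℝ[X]} {r : ℝ} (hroot : R.IsRoot r)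
    (hmin : IsLocalMin (fun s => R.eval s) r) : (X - C r) ^ 2 ∣ R := by
  rcases eq_or_ne R 0 with rfl | hR
  · exact dvd_zero _
  have hderiv : (derivative R).IsRoot r := by
    rw [IsRoot, ← Polynomial.deriv]
    exact hmin.deriv_eq_zero
  exact (le_rootMultiplicity_iff hR).1
    ((one_lt_rootMultiplicity_iff_isRoot hR).2 ⟨hroot, hderiv⟩)

theorem exists_dvd_mem_lukacsCone_of_isRoot {R : ℝ[X]}
    (hR : ∀ s ∈ Set.Ioo (0 : ℝ) 1, 0 ≤ R.eval s) {r : ℝ} (hroot : R.IsRoot r) :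
    ∃ F, F ∣ R ∧ F ∈ lukacsCone F.natDegree ∧ 0 < F.natDegree := by
  have hlin : X - C r ∣ R := dvd_iff_isRoot.2 hroot
  rcases le_or_gt r 0 with hr0 | hr0
  · refine ⟨X - C r, hlin, ?_, by simp⟩
    have hX : (X : ℝ[X]) ∈ lukacsCone 1 := by
      simpa [jacobiWeight] using
        jacobiWeight_mul_sq_mem_lukacsCone (i := 1) (j := 0) (Q := 1) (by simp)
    rw [natDegree_X_sub_C, sub_eq_add_neg, ← C_neg]
    exact add_mem hX (C_mem_lukacsCone (neg_nonneg.2 hr0) 1)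
  rcases le_or_gt 1 r with hr1 | hr1
  · refine ⟨-(X - C r), neg_dvd.2 hlin, ?_, by rw [natDegree_neg, natDegree_X_sub_C]; exact one_pos⟩
    have hone_sub : (1 - X : ℝ[X]) ∈ lukacsCone 1 := by
      simpa [jacobiWeight] using
        jacobiWeight_mul_sq_mem_lukacsCone (i := 0) (j := 1) (Q := 1) (by simp)
    have hadd := add_mem hone_sub (C_mem_lukacsCone (sub_nonneg.2 hr1) 1)
    rw [natDegree_neg, natDegree_X_sub_C]
    convert hadd using 1
    rw [C_sub, C_1]
    ring
  · have hmin : IsLocalMin (fun s => R.eval s) r := by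
      filter_upwards [Ioo_mem_nhds hr0 hr1] with s hs
      exact hroot.eq_zero.trans_le (hR s hs)
    refine ⟨(X - C r) ^ 2, sq_X_sub_C_dvd_of_isLocalMin hroot hmin, ?_, by simp⟩
    exact sq_mem_lukacsCone (by simp)

theorem exists_dvd_mem_lukacsCone {R : ℝ[X]} (hdeg : 0 < R.natDegree)
    (hR : ∀ s ∈ Set.Ioo (0 : ℝ) 1, 0 ≤ R.eval s) :
    ∃ F, F ∣ R ∧ F ∈ lukacsCone F.natDegree ∧ 0 < F.natDegree := by
  obtain ⟨z, hz⟩ := IsAlgClosed.exists_aeval_eq_zero ℂ R (natDegree_pos_iff_degree_pos.1 hdeg).ne'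
  by_cases him : z.im = 0
  · refine exists_dvd_mem_lukacsCone_of_isRoot hR (r := z.re) ?_
    have hzr : z = algebraMap ℝ ℂ z.re := Complex.ext rfl (by simpa using him)
    rw [hzr, aeval_algebraMap_apply] at hz
    simpa using hz
  · have hquad : X ^ 2 - C (2 * z.re) * X + C (‖z‖ ^ 2) = (X - C z.re) ^ 2 + C (z.im ^ 2) := by
      rw [Complex.sq_norm, Complex.normSq_apply]
      simp only [C_mul, C_add, C_pow, C_ofNat]
      ring
    have hquad_deg : ((X - C z.re) ^ 2 + C (z.im ^ 2)).natDegree = 2 := by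
      rw [natDegree_add_C, natDegree_pow, natDegree_X_sub_C]
    refine ⟨_, hquad ▸ quadratic_dvd_of_aeval_eq_zero_im_ne_zero R hz him, ?_, by omega⟩
    rw [hquad_deg]
    exact add_mem (sq_mem_lukacsCone (by simp)) (C_mem_lukacsCone (sq_nonneg _) 2)

theorem mem_lukacsCone_of_nonneg {R : ℝ[X]} (hR : ∀ s ∈ Set.Ioo (0 : ℝ) 1, 0 ≤ R.eval s) :
    R ∈ lukacsCone R.natDegree := by
  induction hd : R.natDegree using Nat.strong_induction_on generalizing R with
  | _ d ih =>
  rcases Nat.eq_zero_or_pos d with rfl | hpos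
  · have hconst := hR (1 / 2) (by norm_num)
    rw [eq_C_of_natDegree_eq_zero hd] at hconst ⊢
    exact C_mem_lukacsCone (by simpa using hconst) 0
  obtain ⟨F, ⟨S, rfl⟩, hF, hFpos⟩ := exists_dvd_mem_lukacsCone (hd ▸ hpos) hR
  have hF0 : F ≠ 0 := ne_zero_of_natDegree_gt hFpos
  have hS0 : S ≠ 0 := by
    rintro rfl
    simp at hd
    omega
  rw [natDegree_mul hF0 hS0] at hd
  rw [← hd]
  exact mul_mem_lukacsCone hF <| ih _ (by omega)
    (eval_nonneg_of_eval_mul_nonneg isOpen_Ioo hF0 (eval_nonneg_of_mem_lukacsCone hF) hR) rfl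

/-! ### Consecutive moments and the Markov inequality on the unit interval -/

/-- Expand `0 ≤ ∫ s ^ (a + 1) * (1 - s) ^ b * ((b + 1) * f - 2 * (1 - s) * f') ^ 2` and remove the
mixed term by integrating `(s ^ (a + 1) * (1 - s) ^ (b + 1) * f ^ 2)'`. -/
theorem sq_mul_jacobiNormSq_le_hardy (a b : ℕ) (f : ℝ[X]) :
    ((b : ℝ) + 1) ^ 2 * jacobiNormSq (a + 1) b f ≤
      2 * (a + 1) * (b + 1) * jacobiNormSq a (b + 1) f +
        4 * jacobiNormSq (a + 1) (b + 2) (derivative f) := by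
  set mixed : ℝ := unitIntegral (jacobiWeight (a + 1) (b + 1) * f * derivative f)
  have hexpand : unitIntegral (jacobiWeight (a + 1) b *
        (((b : ℝ) + 1) • f - (2 : ℝ) • ((1 - X) * derivative f)) ^ 2) =
      ((b : ℝ) + 1) ^ 2 * jacobiNormSq (a + 1) b f - 4 * (b + 1) * mixed +
        4 * jacobiNormSq (a + 1) (b + 2) (derivative f) := by
    simp only [jacobiNormSq, mixed, ← smul_eq_mul, ← map_smul, ← map_sub, ← map_add]
    congr 1
    simp only [jacobiWeight, smul_eq_C_mul, smul_eq_mul, C_mul, C_pow, C_add, C_ofNat]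
    ring
  have hparts : (a + 1) * jacobiNormSq a (b + 1) f - (b + 1) * jacobiNormSq (a + 1) b f +
      2 * mixed = 0 := by
    have hderiv : derivative (jacobiWeight (a + 1) (b + 1) * f ^ 2) =
        ((a : ℝ) + 1) • (jacobiWeight a (b + 1) * f ^ 2) -
          ((b : ℝ) + 1) • (jacobiWeight (a + 1) b * f ^ 2) +
          (2 : ℝ) • (jacobiWeight (a + 1) (b + 1) * f * derivative f) := by
      simp only [jacobiWeight, derivative_mul, derivative_pow, derivative_sub, derivative_one,
        derivative_X, Nat.add_sub_cancel, C_add, C_ofNat, C_1, Nat.cast_add, Nat.cast_one,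
        Nat.cast_ofNat, map_natCast, smul_eq_C_mul]
      ring
    have hends : (jacobiWeight (a + 1) (b + 1) * f ^ 2).eval 1 -
        (jacobiWeight (a + 1) (b + 1) * f ^ 2).eval 0 = 0 := by simp [jacobiWeight]
    rw [← hends, ← unitIntegral_derivative, hderiv]
    simp only [jacobiNormSq, mixed, map_add, map_sub, map_smul, smul_eq_mul]
  have hnonneg := jacobiNormSq_nonneg (a + 1) b
    (((b : ℝ) + 1) • f - (2 : ℝ) • ((1 - X) * derivative f))
  rw [jacobiNormSq, hexpand] at hnonneg
  linear_combination hnonneg - 2 * ((b : ℝ) + 1) * hparts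

theorem sq_mul_jacobiNormSq_le {f : ℝ[X]} {a b n : ℕ} (hn : a + b + 2 * f.natDegree + 2 ≤ n) :
    ((b : ℝ) + 1) ^ 2 * jacobiNormSq a b f ≤ n ^ 2 * jacobiNormSq a (b + 1) f := by
  set d := f.natDegree
  have hn' : (a : ℝ) + b + 2 * d + 2 ≤ n := by exact_mod_cast hn
  have hbernstein := jacobiNormSq_derivative_le (f := f) le_rfl a (b + 1)
  push_cast at hbernstein
  calc ((b : ℝ) + 1) ^ 2 * jacobiNormSq a b f
      ≤ (2 * (a + 1) * (b + 1) + 4 * (d * (d + a + (b + 1) + 1)) + (b + 1) ^ 2) *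
          jacobiNormSq a (b + 1) f := by
        rw [jacobiNormSq_eq_add]
        linear_combination sq_mul_jacobiNormSq_le_hardy a b f + 4 * hbernstein
    _ ≤ (a + b + 2 * d + 2 : ℝ) ^ 2 * jacobiNormSq a (b + 1) f := by
        gcongr
        · exact jacobiNormSq_nonneg _ _ _
        · linear_combination sq_nonneg ((a : ℝ) + 1)
    _ ≤ n ^ 2 * jacobiNormSq a (b + 1) f := by
        gcongr
        exact jacobiNormSq_nonneg _ _ _

theorem sq_mul_moment_le_of_nonneg {R : ℝ[X]} {b n : ℕ} (hn : R.natDegree + b + 2 ≤ n)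
    (hR : ∀ s ∈ Set.Ioo (0 : ℝ) 1, 0 ≤ R.eval s) :
    ((b : ℝ) + 1) ^ 2 * unitIntegral ((1 - X) ^ b * R) ≤
      n ^ 2 * unitIntegral ((1 - X) ^ (b + 1) * R) := by
  have hmem := mem_lukacsCone_of_nonneg hR
  clear hR
  generalize R.natDegree = N at hn hmem
  induction hmem using AddSubmonoid.closure_induction with
  | mem _ hf =>
    obtain ⟨i, j, Q, rfl, hQ⟩ := hf
    have hweight (c : ℕ) : (1 - X) ^ c * (jacobiWeight i j * Q ^ 2) =
        jacobiWeight i (c + j) * Q ^ 2 := by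
      simp only [jacobiWeight]
      ring
    rw [hweight, hweight, add_right_comm]
    calc ((b : ℝ) + 1) ^ 2 * jacobiNormSq i (b + j) Q
        ≤ ((b + j : ℕ) + 1 : ℝ) ^ 2 * jacobiNormSq i (b + j) Q := by
          gcongr
          · exact jacobiNormSq_nonneg _ _ _
          · exact Nat.le_add_right b j
      _ ≤ n ^ 2 * jacobiNormSq i (b + j + 1) Q := sq_mul_jacobiNormSq_le (by omega)
  | zero => simp
  | add f g _ _ hf hg =>
    simp only [mul_add, map_add]
    exact add_le_add hf hg

/-- The growth rate `n² / k` of the first derivative on the class `AbsMono _ n k`; it is a junk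
value for `k = 0`. -/
noncomputable def markovScale (n k : ℕ) : ℝ := (n : ℝ) ^ 2 / k

theorem markovScale_nonneg (n k : ℕ) : 0 ≤ markovScale n k := by
  unfold markovScale
  positivity

theorem natCast_le_markovScale {n k : ℕ} (hk : 1 ≤ k) (hkn : k ≤ n) :
    (n : ℝ) ≤ markovScale n k := by
  have hk0 : (0 : ℝ) < k := by exact_mod_cast hk
  rw [markovScale, le_div_iff₀ hk0, sq]
  gcongr

theorem markovScale_pos {n k : ℕ} (hk : 1 ≤ k) (hkn : k ≤ n) : 0 < markovScale n k :=
  (Nat.cast_pos.2 (hk.trans hkn)).trans_le (natCast_le_markovScale hk hkn)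

theorem markovScale_le_two_mul {n k l : ℕ} (hk : 1 ≤ k) (hl : 1 ≤ l) (hkl : k ≤ 2 * l) :
    markovScale n l ≤ 2 * markovScale n k := by
  have hl0 : (0 : ℝ) < l := by exact_mod_cast hl
  have hk0 : (0 : ℝ) < k := by exact_mod_cast hk
  have hkl' : (k : ℝ) ≤ 2 * l := by exact_mod_cast hkl
  rw [markovScale, markovScale, ← mul_div_assoc, div_le_div_iff₀ hl0 hk0]
  linear_combination (n : ℝ) ^ 2 * hkl'

theorem moment_div_factorial_le_of_nonneg {R : ℝ[X]} {b n : ℕ} (hn : R.natDegree + b + 2 ≤ n)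
    (hR : ∀ s ∈ Set.Ioo (0 : ℝ) 1, 0 ≤ R.eval s) :
    unitIntegral ((1 - X) ^ b * R) / b.factorial ≤
      2 * markovScale n (b + 2) * (unitIntegral ((1 - X) ^ (b + 1) * R) / (b + 1).factorial) := by
  have hmoment_nonneg : 0 ≤ unitIntegral ((1 - X) ^ (b + 1) * R) := by
    refine unitIntegral_nonneg fun s hs => ?_
    rw [eval_mul, eval_pow, eval_sub, eval_one, eval_X]
    exact mul_nonneg (pow_nonneg (sub_nonneg.2 hs.2.le) _) (hR s hs)
  calc unitIntegral ((1 - X) ^ b * R) / b.factorial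
      = ((b : ℝ) + 1) ^ 2 * unitIntegral ((1 - X) ^ b * R) / ((b + 1) * (b + 1).factorial) := by
        rw [Nat.factorial_succ]
        push_cast
        field_simp
    _ ≤ n ^ 2 * unitIntegral ((1 - X) ^ (b + 1) * R) / ((b + 1) * (b + 1).factorial) := by
        gcongr ?_ / _
        exact sq_mul_moment_le_of_nonneg hn hR
    _ = markovScale n (b + 1) * (unitIntegral ((1 - X) ^ (b + 1) * R) / (b + 1).factorial) := by
        rw [markovScale]
        push_cast
        field_simp
    _ ≤ 2 * markovScale n (b + 2) *
          (unitIntegral ((1 - X) ^ (b + 1) * R) / (b + 1).factorial) := by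
        gcongr
        exact markovScale_le_two_mul (by omega) (by omega) (by omega)

/-- Comparing the Taylor formulas of `T` and `T'` at `0` leaves the remainders, which are
consecutive moments of `derivative^[k] T`. -/
theorem derivative_eval_one_le {T : ℝ[X]} {n k : ℕ} (hk : 2 ≤ k) (hkn : k ≤ n)
    (hdeg : T.natDegree ≤ n)
    (hT : ∀ j ≤ k, ∀ s ∈ Set.Icc (0 : ℝ) 1, 0 ≤ (derivative^[j] T).eval s) :
    (derivative T).eval 1 ≤ 2 * markovScale n k * T.eval 1 := by
  obtain ⟨l, rfl⟩ := Nat.exists_eq_add_of_le' hk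
  have hscale : (l : ℝ) + 2 ≤ markovScale n (l + 2) :=
    le_trans (by exact_mod_cast hkn) (natCast_le_markovScale (by omega) hkn)
  have hterms : ∀ i ∈ Finset.range (l + 1), (derivative^[i + 1] T).eval 0 / i.factorial ≤
      2 * markovScale n (l + 2) * ((derivative^[i + 1] T).eval 0 / (i + 1).factorial) := by
    intro i hi
    have hil : i < l + 1 := Finset.mem_range.1 hi
    have hi' : (i : ℝ) ≤ l := by exact_mod_cast Nat.lt_succ_iff.1 hil
    have hcoeff : 0 ≤ (derivative^[i + 1] T).eval 0 / (i + 1).factorial :=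
      div_nonneg (hT _ (by omega) 0 (by norm_num)) (Nat.cast_nonneg _)
    calc (derivative^[i + 1] T).eval 0 / i.factorial
        = (i + 1) * ((derivative^[i + 1] T).eval 0 / (i + 1).factorial) := by
          rw [Nat.factorial_succ]
          push_cast
          field_simp
      _ ≤ _ := by gcongr; linarith
  have hremainder : unitIntegral ((1 - X) ^ l * derivative^[l + 2] T) / l.factorial ≤
      2 * markovScale n (l + 2) *
        (unitIntegral ((1 - X) ^ (l + 1) * derivative^[l + 2] T) / (l + 1).factorial) :=
    moment_div_factorial_le_of_nonneg
      (by have := natDegree_iterate_derivative T (l + 2); omega)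
      fun s hs => hT _ le_rfl s (Set.Ioo_subset_Icc_self hs)
  have hT0 := mul_nonneg (markovScale_nonneg n (l + 2)) (hT 0 (Nat.zero_le _) 0 (by norm_num))
  have htaylor : (derivative T).eval 1 =
      ∑ i ∈ Finset.range (l + 1), (derivative^[i + 1] T).eval 0 / i.factorial +
        unitIntegral ((1 - X) ^ l * derivative^[l + 2] T) / l.factorial :=
    eval_one_eq_sum_add_unitIntegral (derivative T) l
  have hsum := Finset.sum_le_sum hterms
  rw [← Finset.mul_sum] at hsum
  rw [htaylor, eval_one_eq_sum_add_unitIntegral T (l + 1), Finset.sum_range_succ' _ (l + 1),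
    Nat.factorial_zero, Nat.cast_one, div_one]
  linear_combination hsum + hremainder + 2 * hT0

/-! ### Absolutely monotone polynomials -/

theorem iterate_derivative_comp_linear (T : ℝ[X]) (a b : ℝ) (j : ℕ) :
    derivative^[j] (T.comp (C a * X + C b)) =
      C (a ^ j) * (derivative^[j] T).comp (C a * X + C b) := by
  induction j with
  | zero => simp
  | succ j ih =>
    rw [Function.iterate_succ_apply', ih, Function.iterate_succ_apply', derivative_C_mul,
      derivative_comp]
    simp only [derivative_add, derivative_mul, derivative_C, derivative_X, pow_succ, C_mul]
    ring

theorem exists_antiderivative (P : ℝ[X]) (a : ℝ) :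
    ∃ S : ℝ[X], derivative S = P ∧ S.eval a = 0 := by
  obtain ⟨S, hS⟩ : ∃ S : ℝ[X], derivative S = P := by
    induction P using Polynomial.induction_on' with
    | add p q hp hq =>
      obtain ⟨S, rfl⟩ := hp
      obtain ⟨S', rfl⟩ := hq
      exact ⟨S + S', derivative_add⟩
    | monomial i c =>
      refine ⟨monomial (i + 1) (c / (i + 1)), ?_⟩
      rw [derivative_monomial]
      congr 1
      push_cast
      field_simp
  exact ⟨S - C (S.eval a), by simp [hS], by simp⟩

theorem monotoneOn_eval_of_derivative_nonneg {S : ℝ[X]} {a b : ℝ}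
    (h : ∀ x ∈ Set.Icc a b, 0 ≤ (derivative S).eval x) :
    MonotoneOn (fun x => S.eval x) (Set.Icc a b) :=
  monotoneOn_of_deriv_nonneg (convex_Icc a b) S.continuous.continuousOn
    S.differentiable.differentiableOn fun x hx => by
      rw [Polynomial.deriv]; exact h x (interior_subset hx)

theorem AbsMono.nonneg {P : ℝ[X]} {n k : ℕ} (hP : AbsMono P n k) {x : ℝ}
    (hx : x ∈ Set.Icc (-1 : ℝ) 1) : 0 ≤ P.eval x :=
  hP.2 0 (Nat.zero_le k) x hx

theorem AbsMono.monotoneOn {P : ℝ[X]} {n k : ℕ} (hP : AbsMono P n k) (hk : 1 ≤ k) :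
    MonotoneOn (fun x => P.eval x) (Set.Icc (-1) 1) :=
  monotoneOn_eval_of_derivative_nonneg (hP.2 1 hk)

theorem AbsMono.eval_le_eval_one {P : ℝ[X]} {n k : ℕ} (hP : AbsMono P n k) (hk : 1 ≤ k) {x : ℝ}
    (hx : x ∈ Set.Icc (-1 : ℝ) 1) : P.eval x ≤ P.eval 1 :=
  hP.monotoneOn hk hx (by norm_num) hx.2

theorem AbsMono.mono_degree {P : ℝ[X]} {n n' k : ℕ} (hP : AbsMono P n k) (h : n ≤ n') :
    AbsMono P n' k :=
  ⟨hP.1.trans h, hP.2⟩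

theorem AbsMono.iterate_derivative {P : ℝ[X]} {n k : ℕ} (hP : AbsMono P n k) {i : ℕ}
    (hi : i ≤ k) : AbsMono (derivative^[i] P) n (k - i) := by
  refine ⟨(natDegree_iterate_derivative P i).trans ((Nat.sub_le _ _).trans hP.1),
    fun m hm x hx => ?_⟩
  rw [← Function.iterate_add_apply]
  exact hP.2 _ (by omega) x hx

theorem AbsMono.of_derivative {S : ℝ[X]} {n k : ℕ} (hP : AbsMono (derivative S) n k)
    (h0 : 0 ≤ S.eval (-1)) : AbsMono S (n + 1) (k + 1) := by
  refine ⟨?_, fun m hm x hx => ?_⟩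
  · have := hP.1
    rw [natDegree_derivative] at this
    omega
  · rcases m with _ | m
    · exact h0.trans (monotoneOn_eval_of_derivative_nonneg (fun x hx => hP.nonneg hx)
        (by norm_num) hx hx.1)
    · rw [Function.iterate_succ_apply]
      exact hP.2 m (by omega) x hx

theorem AbsMono.mul {P Q : ℝ[X]} {n n' k : ℕ} (hP : AbsMono P n k) (hQ : AbsMono Q n' k) :
    AbsMono (P * Q) (n + n') k := by
  refine ⟨natDegree_mul_le.trans (add_le_add hP.1 hQ.1), fun m hm x hx => ?_⟩
  rw [iterate_derivative_mul, eval_finsetSum]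
  refine Finset.sum_nonneg fun i hi => ?_
  rw [nsmul_eq_mul, eval_mul, eval_natCast, eval_mul]
  exact mul_nonneg (Nat.cast_nonneg _)
    (mul_nonneg (hP.2 _ (by omega) x hx) (hQ.2 _ (by have := Finset.mem_range.1 hi; omega) x hx))

theorem AbsMono.one (k : ℕ) : AbsMono 1 0 k := by
  refine ⟨by simp, fun m _ x _ => ?_⟩
  rcases m with _ | m
  · simp
  · simp [Function.iterate_succ_apply]

theorem AbsMono.pow {P : ℝ[X]} {n k : ℕ} (hP : AbsMono P n k) (r : ℕ) :
    AbsMono (P ^ r) (r * n) k := by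
  induction r with
  | zero => simpa using AbsMono.one k
  | succ r ih => rw [pow_succ, add_mul, one_mul]; exact ih.mul hP

theorem AbsMono.iterate_derivative_mul_eval_le {P Q : ℝ[X]} {n n' k : ℕ} (hP : AbsMono P n k)
    (hQ : AbsMono Q n' k) {m : ℕ} (hm : m ≤ k) {x : ℝ} (hx : x ∈ Set.Icc (-1 : ℝ) 1) :
    (derivative^[m] P).eval x * Q.eval x ≤ (derivative^[m] (P * Q)).eval x := by
  rw [iterate_derivative_mul, eval_finsetSum]
  refine le_trans (le_of_eq ?_) (Finset.single_le_sum (fun i hi => ?_)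
    (Finset.mem_range.2 m.succ_pos : 0 ∈ Finset.range m.succ))
  · simp
  · rw [nsmul_eq_mul, eval_mul, eval_natCast, eval_mul]
    have := Finset.mem_range.1 hi
    exact mul_nonneg (Nat.cast_nonneg _)
      (mul_nonneg (hP.2 _ (by omega) x hx) (hQ.2 _ (by omega) x hx))

theorem AbsMono.X_add_one (k : ℕ) : AbsMono (X + C 1) 1 k := by
  refine ⟨(natDegree_X_add_C 1).le, fun m _ x hx => ?_⟩
  rcases m with _ | _ | m
  · simp only [Function.iterate_zero, id, eval_add, eval_X, eval_C]
    linarith [hx.1]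
  · simp
  · simp [Function.iterate_succ_apply]

theorem AbsMono.add_one_mul_derivative_eval_le {P : ℝ[X]} {n k : ℕ} (hP : AbsMono P n k)
    (hk : 2 ≤ k) (hkn : k ≤ n) {x : ℝ} (hx : x ∈ Set.Icc (-1 : ℝ) 1) :
    (x + 1) * (derivative P).eval x ≤ 2 * markovScale n k * P.eval x := by
  have hx0 : 0 ≤ x + 1 := by linarith [hx.1]
  have hderiv := iterate_derivative_comp_linear P (x + 1) (-1)
  have hdeg : (P.comp (C (x + 1) * X + C (-1))).natDegree ≤ n := by
    have hlin : (C (x + 1) * X + C (-1) : ℝ[X]).natDegree ≤ 1 := by compute_degree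
    calc _ ≤ P.natDegree * (C (x + 1) * X + C (-1) : ℝ[X]).natDegree := natDegree_comp_le
      _ ≤ n * 1 := Nat.mul_le_mul hP.1 hlin
      _ = n := mul_one n
  have hmarkov := derivative_eval_one_le hk hkn hdeg fun j hj s hs => by
    rw [hderiv, eval_mul, eval_C, eval_comp]
    refine mul_nonneg (pow_nonneg hx0 j) (hP.2 j hj _ ?_)
    simp only [eval_add, eval_mul, eval_C, eval_X]
    exact ⟨by linarith [mul_nonneg hx0 hs.1], by
      linarith [mul_le_mul_of_nonneg_left hs.2 hx0, hx.2]⟩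
  have hderiv_one := hderiv 1
  simp only [Function.iterate_one, pow_one] at hderiv_one
  rw [hderiv_one] at hmarkov
  simpa using hmarkov

theorem AbsMono.iterate_derivative_eval_le {P : ℝ[X]} {n k m : ℕ} (hP : AbsMono P n k)
    (hk : 1 ≤ k) (hkn : k ≤ n) (hm : 2 * m ≤ k) {x : ℝ} (hx : x ∈ Set.Icc (0 : ℝ) 1) :
    (derivative^[m] P).eval x ≤ (4 * markovScale n k) ^ m * P.eval x := by
  have hx' : x ∈ Set.Icc (-1 : ℝ) 1 := ⟨by linarith [hx.1], hx.2⟩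
  have hscale := markovScale_nonneg n k
  induction m with
  | zero => simp
  | succ m ih =>
    have hD := hP.iterate_derivative (i := m) (by omega)
    have hD0 := hD.nonneg hx'
    have hD1 : 0 ≤ (derivative (derivative^[m] P)).eval x := hD.2 1 (by omega) x hx'
    rw [Function.iterate_succ_apply']
    calc (derivative (derivative^[m] P)).eval x
        ≤ (x + 1) * (derivative (derivative^[m] P)).eval x := by linarith [mul_nonneg hx.1 hD1]
      _ ≤ 2 * markovScale n (k - m) * (derivative^[m] P).eval x :=
        hD.add_one_mul_derivative_eval_le (by omega) (by omega) hx'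
      _ ≤ 2 * (2 * markovScale n k) * ((4 * markovScale n k) ^ m * P.eval x) := by
        gcongr
        · exact markovScale_le_two_mul hk (by omega) (by omega)
        · exact ih (by omega)
      _ = (4 * markovScale n k) ^ (m + 1) * P.eval x := by ring

/-- Apply Markov's inequality to the antiderivative of `P` vanishing at `-1`. -/
theorem AbsMono.eval_one_le_integral {P : ℝ[X]} {n k : ℕ} (hP : AbsMono P n k) (hk : 1 ≤ k)
    (hkn : k ≤ n) : P.eval 1 ≤ 4 * markovScale n k * ∫ x in (-1 : ℝ)..1, P.eval x := by
  obtain ⟨S, rfl, hS⟩ := exists_antiderivative P (-1)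
  have hSmono := hP.of_derivative hS.ge
  have hmarkov := hSmono.add_one_mul_derivative_eval_le (by omega) (by omega) (x := 1) (by norm_num)
  have hscale : markovScale (n + 1) (k + 1) ≤ 4 * markovScale n k := by
    have : (0 : ℝ) < k := by exact_mod_cast hk
    have hn : (1 : ℝ) ≤ n := by exact_mod_cast hk.trans hkn
    unfold markovScale
    push_cast
    calc ((n : ℝ) + 1) ^ 2 / ((k : ℝ) + 1) ≤ ((n : ℝ) + n) ^ 2 / k := by gcongr; linarith
      _ = 4 * ((n : ℝ) ^ 2 / k) := by ring
  rw [integral_eval_derivative, hS, sub_zero]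
  linarith [mul_le_mul_of_nonneg_right hscale (hSmono.nonneg (x := 1) (by norm_num))]

/-! ### The Nikolskii and Markov inequalities in `L_q` -/

theorem Lnorm_nonneg (f : ℝ → ℝ) (q : ENNReal) {a b : ℝ} (hab : a ≤ b) : 0 ≤ Lnorm f q a b := by
  rw [Lnorm]
  split_ifs
  · refine Real.sSup_nonneg ?_
    rintro _ ⟨x, -, rfl⟩
    exact abs_nonneg _
  · exact Real.rpow_nonneg (intervalIntegral.integral_nonneg hab fun _ _ => by positivity) _

theorem Lnorm_rpow_toReal (f : ℝ → ℝ) {q : ENNReal} (hq : 0 < q.toReal) {a b : ℝ} (hab : a ≤ b) :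
    Lnorm f q a b ^ q.toReal = ∫ x in a..b, |f x| ^ q.toReal := by
  have hqt : q ≠ ⊤ := fun h => by simp [h] at hq
  rw [Lnorm, if_neg hqt, LqNorm, one_div, Real.rpow_inv_rpow _ hq.ne']
  exact intervalIntegral.integral_nonneg hab fun _ _ => by positivity

theorem AbsMono.Lnorm_top {P : ℝ[X]} {n k : ℕ} (hP : AbsMono P n k) (hk : 1 ≤ k) :
    Lnorm (fun x => P.eval x) ⊤ (-1) 1 = P.eval 1 := by
  rw [Lnorm, if_pos rfl, LinfNorm]
  refine IsGreatest.csSup_eq ⟨⟨1, by norm_num, abs_of_nonneg (hP.nonneg (by norm_num))⟩, ?_⟩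
  rintro _ ⟨x, hx, rfl⟩
  simp only [abs_of_nonneg (hP.nonneg hx)]
  exact hP.eval_le_eval_one hk hx

theorem continuous_abs_eval_rpow (P : ℝ[X]) {p : ℝ} (hp : 0 ≤ p) :
    Continuous fun x => |P.eval x| ^ p :=
  P.continuous.abs.rpow_const fun _ => Or.inr hp

theorem integral_abs_eval_rpow_nonneg (P : ℝ[X]) (p : ℝ) :
    0 ≤ ∫ x in (-1 : ℝ)..1, |P.eval x| ^ p :=
  intervalIntegral.integral_nonneg (by norm_num) fun _ _ => by positivity

theorem AbsMono.integral_rpow_le {P : ℝ[X]} {n k : ℕ} (hP : AbsMono P n k) (hk : 1 ≤ k)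
    {p q : ℝ} (hp : 0 ≤ p) (hpq : p ≤ q) :
    ∫ x in (-1 : ℝ)..1, |P.eval x| ^ q ≤
      P.eval 1 ^ (q - p) * ∫ x in (-1 : ℝ)..1, |P.eval x| ^ p := by
  rw [← intervalIntegral.integral_const_mul]
  refine intervalIntegral.integral_mono_on (by norm_num)
    ((continuous_abs_eval_rpow P (hp.trans hpq)).intervalIntegrable _ _)
    (((continuous_abs_eval_rpow P hp).const_mul _).intervalIntegrable _ _) fun x hx => ?_
  have h0 := hP.nonneg hx
  rw [abs_of_nonneg h0]
  calc P.eval x ^ q = P.eval x ^ (q - p) * P.eval x ^ p := by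
        rw [← Real.rpow_add_of_nonneg h0 (by linarith) hp, sub_add_cancel]
    _ ≤ P.eval 1 ^ (q - p) * P.eval x ^ p := by
        gcongr
        exact hP.eval_le_eval_one hk hx

/-- For a natural exponent `r` this is the case of `P ^ r`; an arbitrary `p ≤ r = ⌈p⌉₊` reduces to
it by bounding `P ^ r ≤ P(1) ^ (r - p) * P ^ p` under the integral. -/
theorem AbsMono.eval_one_rpow_le {P : ℝ[X]} {n k : ℕ} (hP : AbsMono P n k) (hk : 1 ≤ k)
    (hkn : k ≤ n) {p : ℝ} (hp : 0 < p) :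
    P.eval 1 ^ p ≤
      4 * (⌈p⌉₊ : ℝ) ^ 2 * markovScale n k * ∫ x in (-1 : ℝ)..1, |P.eval x| ^ p := by
  have hI := integral_abs_eval_rpow_nonneg P p
  have hscale := markovScale_nonneg n k
  have hr : 1 ≤ ⌈p⌉₊ := Nat.one_le_ceil_iff.2 hp
  have hpr : p ≤ (⌈p⌉₊ : ℝ) := Nat.le_ceil p
  set I := ∫ x in (-1 : ℝ)..1, |P.eval x| ^ p
  set r := ⌈p⌉₊
  rcases (hP.nonneg (x := 1) (by norm_num)).eq_or_lt with h1 | h1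
  · rw [← h1, Real.zero_rpow hp.ne']
    positivity
  have hintegral :
      ∫ x in (-1 : ℝ)..1, (P ^ r).eval x = ∫ x in (-1 : ℝ)..1, |P.eval x| ^ (r : ℝ) := by
    refine intervalIntegral.integral_congr fun x hx => ?_
    rw [Set.uIcc_of_le (by norm_num)] at hx
    simp only [eval_pow, Real.rpow_natCast, abs_of_nonneg (hP.nonneg hx)]
  refine le_of_mul_le_mul_left ?_ (Real.rpow_pos_of_pos h1 ((r : ℝ) - p))
  calc P.eval 1 ^ ((r : ℝ) - p) * P.eval 1 ^ p = (P ^ r).eval 1 := by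
        rw [← Real.rpow_add h1, sub_add_cancel, Real.rpow_natCast, eval_pow]
    _ ≤ 4 * markovScale (r * n) k * ∫ x in (-1 : ℝ)..1, |P.eval x| ^ (r : ℝ) :=
        hintegral ▸ (hP.pow r).eval_one_le_integral hk (hkn.trans (Nat.le_mul_of_pos_left n hr))
    _ ≤ 4 * markovScale (r * n) k * (P.eval 1 ^ ((r : ℝ) - p) * I) :=
        mul_le_mul_of_nonneg_left (hP.integral_rpow_le hk hp.le hpr)
          (mul_nonneg (by norm_num) (markovScale_nonneg _ _))
    _ = P.eval 1 ^ ((r : ℝ) - p) * (4 * (r : ℝ) ^ 2 * markovScale n k * I) := by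
        simp only [markovScale, Nat.cast_mul]
        ring

theorem exists_eval_one_le_Lnorm {p : ENNReal} (hp : 0 < p) :
    ∃ C : ℝ, 0 < C ∧ ∀ {n k : ℕ} {P : ℝ[X]}, 1 ≤ k → k ≤ n → AbsMono P n k →
      P.eval 1 ≤ C * markovScale n k ^ (1 / p.toReal) * Lnorm (fun x => P.eval x) p (-1) 1 := by
  rcases eq_or_ne p ⊤ with rfl | hpt
  · refine ⟨1, one_pos, fun hk _ hP => ?_⟩
    rw [hP.Lnorm_top hk]
    simp
  have hp0 : 0 < p.toReal := ENNReal.toReal_pos hp.ne' hpt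
  have : 0 < ⌈p.toReal⌉₊ := Nat.ceil_pos.2 hp0
  set A : ℝ := 4 * (⌈p.toReal⌉₊ : ℝ) ^ 2
  have hA : 0 < A := by positivity
  refine ⟨A ^ (1 / p.toReal), by positivity, fun {n k P} hk hkn hP => ?_⟩
  have hscale := markovScale_nonneg n k
  have hN := Lnorm_nonneg (fun x => P.eval x) p (by norm_num : (-1 : ℝ) ≤ 1)
  refine (Real.rpow_le_rpow_iff (hP.nonneg (by norm_num)) (by positivity) hp0).1 ?_
  rw [Real.mul_rpow (by positivity) hN, Real.mul_rpow (by positivity) (by positivity),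
    ← Real.rpow_mul hA.le, ← Real.rpow_mul hscale, one_div_mul_cancel hp0.ne', Real.rpow_one,
    Real.rpow_one, Lnorm_rpow_toReal _ hp0 (by norm_num)]
  exact hP.eval_one_rpow_le hk hkn hp0

theorem exists_Lnorm_le_Lnorm {p q : ENNReal} (hp : 0 < p) (hpq : p ≤ q) :
    ∃ C : ℝ, 0 < C ∧ ∀ {n k : ℕ} {P : ℝ[X]}, 1 ≤ k → k ≤ n → AbsMono P n k →
      Lnorm (fun x => P.eval x) q (-1) 1 ≤
        C * markovScale n k ^ (1 / p.toReal - 1 / q.toReal) *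
          Lnorm (fun x => P.eval x) p (-1) 1 := by
  obtain ⟨C, hC, hle_Lnorm⟩ := exists_eval_one_le_Lnorm hp
  rcases eq_or_ne q ⊤ with rfl | hqt
  · refine ⟨C, hC, fun hk hkn hP => ?_⟩
    rw [hP.Lnorm_top hk]
    simpa using hle_Lnorm hk hkn hP
  have hp0 : 0 < p.toReal := ENNReal.toReal_pos hp.ne' (ne_top_of_le_ne_top hqt hpq)
  have hpq' : p.toReal ≤ q.toReal := ENNReal.toReal_mono hqt hpq
  set p' := p.toReal
  set q' := q.toReal
  have hq0 : 0 < q' := hp0.trans_le hpq'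
  refine ⟨C ^ ((q' - p') / q'), by positivity, fun {n k P} hk hkn hP => ?_⟩
  have hscale := markovScale_nonneg n k
  have hNq := Lnorm_nonneg (fun x => P.eval x) q (by norm_num : (-1 : ℝ) ≤ 1)
  have hN := Lnorm_nonneg (fun x => P.eval x) p (by norm_num : (-1 : ℝ) ≤ 1)
  have hNp := Lnorm_rpow_toReal (fun x => P.eval x) hp0 (by norm_num : (-1 : ℝ) ≤ 1)
  have h0 : 0 ≤ P.eval 1 := hP.nonneg (by norm_num)
  have hle := hle_Lnorm hk hkn hP
  set N := Lnorm (fun x => P.eval x) p (-1) 1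
  set ν := markovScale n k
  refine (Real.rpow_le_rpow_iff hNq (by positivity) hq0).1 ?_
  calc Lnorm (fun x => P.eval x) q (-1) 1 ^ q' ≤ P.eval 1 ^ (q' - p') * N ^ p' := by
        rw [Lnorm_rpow_toReal _ hq0 (by norm_num), hNp]
        exact hP.integral_rpow_le hk hp0.le hpq'
    _ ≤ (C * ν ^ (1 / p') * N) ^ (q' - p') * N ^ p' := by gcongr
    _ = (C * ν ^ (1 / p')) ^ (q' - p') * N ^ q' := by
        rw [Real.mul_rpow (by positivity) hN, mul_assoc,
          ← Real.rpow_add_of_nonneg hN (by linarith) hp0.le, sub_add_cancel]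
    _ = (C ^ ((q' - p') / q') * ν ^ (1 / p' - 1 / q') * N) ^ q' := by
        rw [Real.mul_rpow (by positivity) hN, Real.mul_rpow hC.le (by positivity),
          Real.mul_rpow (by positivity) (by positivity), ← Real.rpow_mul hC.le,
          ← Real.rpow_mul hscale, ← Real.rpow_mul hscale,
          div_mul_cancel₀ _ hq0.ne']
        congr 3
        field_simp

theorem integral_le_two_mul_of_monotoneOn {f : ℝ → ℝ} (hf : MonotoneOn f (Set.Icc (-1) 1)) :
    ∫ x in (-1 : ℝ)..1, f x ≤ 2 * ∫ x in (0 : ℝ)..1, f x := by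
  have hint_total : IntervalIntegrable f volume (-1) 1 :=
    MonotoneOn.intervalIntegrable (by rwa [Set.uIcc_of_le (by norm_num)])
  have hintegral : IntervalIntegrable f volume (-1) 0 :=
    hint_total.mono_set (Set.uIcc_subset_uIcc_left (by norm_num))
  have hintegral' : IntervalIntegrable f volume 0 1 :=
    hint_total.mono_set (Set.uIcc_subset_uIcc_right (by norm_num))
  have hshift : ∫ x in (0 : ℝ)..1, f (x - 1) = ∫ x in (-1 : ℝ)..0, f x := by
    rw [intervalIntegral.integral_comp_sub_right]
    norm_num
  have hle : ∫ x in (0 : ℝ)..1, f (x - 1) ≤ ∫ x in (0 : ℝ)..1, f x := by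
    refine intervalIntegral.integral_mono_on (by norm_num) ?_ hintegral' fun x hx => ?_
    · simpa using hintegral.comp_sub_right 1
    · exact hf ⟨by linarith [hx.1], by linarith [hx.2]⟩ ⟨by linarith [hx.1], hx.2⟩ (by linarith)
  rw [← intervalIntegral.integral_add_adjacent_intervals hintegral hintegral', ← hshift]
  linarith

theorem AbsMono.monotoneOn_abs_rpow {P : ℝ[X]} {n k : ℕ} (hP : AbsMono P n k) (hk : 1 ≤ k)
    {q : ℝ} (hq : 0 ≤ q) : MonotoneOn (fun x => |P.eval x| ^ q) (Set.Icc (-1) 1) :=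
  fun x hx y hy hxy => by
    simp only [abs_of_nonneg (hP.nonneg hx), abs_of_nonneg (hP.nonneg hy)]
    exact Real.rpow_le_rpow (hP.nonneg hx) (hP.monotoneOn hk hx hy hxy) hq

theorem AbsMono.integral_iterate_derivative_rpow_le {P : ℝ[X]} {n k m : ℕ} (hP : AbsMono P n k)
    (hk : 1 ≤ k) (hkn : k ≤ n) (hm : 2 * m ≤ k) {q : ℝ} (hq : 0 ≤ q) :
    ∫ x in (-1 : ℝ)..1, |(derivative^[m] P).eval x| ^ q ≤
      2 * ((4 * markovScale n k) ^ m) ^ q * ∫ x in (-1 : ℝ)..1, |P.eval x| ^ q := by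
  have hD := hP.iterate_derivative (i := m) (by omega)
  have hscale := markovScale_nonneg n k
  have hP_cont := continuous_abs_eval_rpow P hq
  have hright : ∫ x in (0 : ℝ)..1, |(derivative^[m] P).eval x| ^ q ≤
      ((4 * markovScale n k) ^ m) ^ q * ∫ x in (0 : ℝ)..1, |P.eval x| ^ q := by
    rw [← intervalIntegral.integral_const_mul]
    refine intervalIntegral.integral_mono_on (by norm_num)
      ((continuous_abs_eval_rpow _ hq).intervalIntegrable _ _)
      ((hP_cont.const_mul _).intervalIntegrable _ _) fun x hx => ?_
    have hx' : x ∈ Set.Icc (-1 : ℝ) 1 := ⟨by linarith [hx.1], hx.2⟩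
    rw [abs_of_nonneg (hD.nonneg hx'), abs_of_nonneg (hP.nonneg hx'),
      ← Real.mul_rpow (by positivity) (hP.nonneg hx')]
    exact Real.rpow_le_rpow (hD.nonneg hx') (hP.iterate_derivative_eval_le hk hkn hm hx) hq
  have hsub : ∫ x in (0 : ℝ)..1, |P.eval x| ^ q ≤ ∫ x in (-1 : ℝ)..1, |P.eval x| ^ q :=
    intervalIntegral.integral_mono_interval (by norm_num) (by norm_num) le_rfl
      (Filter.Eventually.of_forall fun _ => by positivity) (hP_cont.intervalIntegrable _ _)
  calc ∫ x in (-1 : ℝ)..1, |(derivative^[m] P).eval x| ^ q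
      ≤ 2 * ∫ x in (0 : ℝ)..1, |(derivative^[m] P).eval x| ^ q :=
        integral_le_two_mul_of_monotoneOn (hD.monotoneOn_abs_rpow (by omega) hq)
    _ ≤ 2 * (((4 * markovScale n k) ^ m) ^ q * ∫ x in (-1 : ℝ)..1, |P.eval x| ^ q) := by
        gcongr
        exact hright.trans (by gcongr)
    _ = _ := by ring

theorem exists_Lnorm_iterate_derivative_le {q : ENNReal} (hq : 0 < q) (m : ℕ) :
    ∃ C : ℝ, 0 < C ∧ ∀ {n k : ℕ} {P : ℝ[X]}, 1 ≤ k → k ≤ n → 2 * m ≤ k → AbsMono P n k →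
      Lnorm (fun x => (derivative^[m] P).eval x) q (-1) 1 ≤
        C * markovScale n k ^ m * Lnorm (fun x => P.eval x) q (-1) 1 := by
  rcases eq_or_ne q ⊤ with rfl | hqt
  · refine ⟨4 ^ m, by positivity, fun hk hkn hm hP => ?_⟩
    rw [hP.Lnorm_top hk, (hP.iterate_derivative (by omega)).Lnorm_top (by omega), ← mul_pow]
    exact hP.iterate_derivative_eval_le hk hkn hm (by norm_num)
  have hq0 : 0 < q.toReal := ENNReal.toReal_pos hq.ne' hqt
  refine ⟨2 ^ (1 / q.toReal) * 4 ^ m, by positivity, fun {n k P} hk hkn hm hP => ?_⟩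
  have hscale := markovScale_nonneg n k
  have hN := Lnorm_nonneg (fun x => P.eval x) q (by norm_num : (-1 : ℝ) ≤ 1)
  refine (Real.rpow_le_rpow_iff (Lnorm_nonneg _ q (by norm_num)) (by positivity) hq0).1 ?_
  rw [Real.mul_rpow (by positivity) hN, Lnorm_rpow_toReal _ hq0 (by norm_num),
    Lnorm_rpow_toReal _ hq0 (by norm_num), mul_assoc (2 ^ (1 / q.toReal) : ℝ), ← mul_pow,
    Real.mul_rpow (by positivity) (by positivity), ← Real.rpow_mul (by norm_num),
    one_div_mul_cancel hq0.ne', Real.rpow_one]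
  exact hP.integral_iterate_derivative_rpow_le hk hkn hm hq0.le

theorem exists_Lnorm_iterate_derivative_le_Lnorm {p q : ENNReal} (hp : 0 < p) (hpq : p ≤ q)
    (m : ℕ) :
    ∃ C : ℝ, 0 < C ∧ ∀ {n k : ℕ} {P : ℝ[X]}, 1 ≤ k → k ≤ n → 2 * m ≤ k → AbsMono P n k →
      Lnorm (fun x => (derivative^[m] P).eval x) q (-1) 1 ≤
        C * markovScale n k ^ ((m : ℝ) + 1 / p.toReal - 1 / q.toReal) *
          Lnorm (fun x => P.eval x) p (-1) 1 := by
  obtain ⟨A, hA, hNikolskii⟩ := exists_Lnorm_le_Lnorm hp hpq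
  obtain ⟨B, hB, hMarkov⟩ := exists_Lnorm_iterate_derivative_le (hp.trans_le hpq) m
  refine ⟨B * A, by positivity, fun {n k P} hk hkn hm hP => ?_⟩
  have hscale := markovScale_pos hk hkn
  set ν := markovScale n k
  set N := Lnorm (fun x => P.eval x) p (-1) 1
  calc Lnorm (fun x => (derivative^[m] P).eval x) q (-1) 1
      ≤ B * ν ^ m * Lnorm (fun x => P.eval x) q (-1) 1 := hMarkov hk hkn hm hP
    _ ≤ B * ν ^ m * (A * ν ^ (1 / p.toReal - 1 / q.toReal) * N) := by
        gcongr
        exact hNikolskii hk hkn hP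
    _ = B * A * ν ^ ((m : ℝ) + 1 / p.toReal - 1 / q.toReal) * N := by
        rw [add_sub_assoc, Real.rpow_add hscale, Real.rpow_natCast]
        ring

/-! ### Moments of a Fejér kernel -/

/-- The Fejér-type kernel `(1 - T_M(1 - 2s)) / s`, where `T_M` is the Chebyshev polynomial. At
`s = sin² φ` it equals `2 sin²(Mφ) / sin² φ`, so on `[0,1]` it is concentrated at `0` on the scale
`1 / M ^ 2`. -/
noncomputable def fejerKernel (M : ℕ) : ℝ[X] :=
  (1 - (Chebyshev.T ℝ M).comp (1 - C 2 * X)).divX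

theorem fejerKernel_mul_X (M : ℕ) :
    fejerKernel M * X = 1 - (Chebyshev.T ℝ M).comp (1 - C 2 * X) := by
  have h := divX_mul_X_add (1 - (Chebyshev.T ℝ M).comp (1 - C 2 * X))
  have h0 : (1 - (Chebyshev.T ℝ M).comp (1 - C 2 * X)).coeff 0 = 0 := by
    simp [coeff_zero_eq_eval_zero, eval_comp]
  rwa [h0, C_0, add_zero] at h

theorem natDegree_fejerKernel_le (M : ℕ) : (fejerKernel M).natDegree ≤ M - 1 := by
  have hlin : (1 - C 2 * X : ℝ[X]).natDegree ≤ 1 := by compute_degree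
  have hcomp : ((Chebyshev.T ℝ M).comp (1 - C 2 * X)).natDegree ≤ M :=
    natDegree_comp_le.trans (by simpa using Nat.mul_le_mul_left M hlin)
  rw [fejerKernel, natDegree_divX_eq_natDegree_tsub_one]
  exact Nat.sub_le_sub_right ((natDegree_sub_le _ _).trans (max_le (by simp) hcomp)) 1

theorem sin_sq_mul_fejerKernel_eval (M : ℕ) (φ : ℝ) :
    Real.sin φ ^ 2 * (fejerKernel M).eval (Real.sin φ ^ 2) = 2 * Real.sin (M * φ) ^ 2 := by
  have h := congrArg (eval (Real.sin φ ^ 2)) (fejerKernel_mul_X M)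
  have hcos : 1 - 2 * Real.sin φ ^ 2 = Real.cos (2 * φ) := by
    rw [Real.cos_two_mul, Real.cos_sq']
    ring
  simp only [eval_sub, eval_one, eval_comp, eval_mul, eval_C, eval_X] at h
  rw [hcos, Chebyshev.T_real_cos, Int.cast_natCast, mul_left_comm, Real.cos_two_mul,
    Real.cos_sq'] at h
  linear_combination h

theorem exists_sin_sq_eq {s : ℝ} (hs : s ∈ Set.Icc (0 : ℝ) 1) :
    ∃ φ ∈ Set.Icc 0 (Real.pi / 2), Real.sin φ ^ 2 = s :=
  ⟨Real.arcsin √s, ⟨Real.arcsin_nonneg.2 (Real.sqrt_nonneg s), Real.arcsin_le_pi_div_two _⟩, by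
    rw [Real.sin_arcsin (by linarith [Real.sqrt_nonneg s]) (Real.sqrt_le_one.2 hs.2),
      Real.sq_sqrt hs.1]⟩

theorem fejerKernel_eval_nonneg (M : ℕ) {s : ℝ} (hs : s ∈ Set.Ioc (0 : ℝ) 1) :
    0 ≤ (fejerKernel M).eval s := by
  obtain ⟨φ, -, rfl⟩ := exists_sin_sq_eq ⟨hs.1.le, hs.2⟩
  refine nonneg_of_mul_nonneg_right ?_ hs.1
  rw [sin_sq_mul_fejerKernel_eval]
  positivity

theorem mul_fejerKernel_eval_le_two (M : ℕ) {s : ℝ} (hs : s ∈ Set.Icc (0 : ℝ) 1) :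
    s * (fejerKernel M).eval s ≤ 2 := by
  obtain ⟨φ, -, rfl⟩ := exists_sin_sq_eq hs
  rw [sin_sq_mul_fejerKernel_eval]
  linarith [Real.sin_sq_le_one (M * φ)]

/-- Both angles lie in `[0, π / 2]`, where Jordan's inequality applies. -/
theorem mul_sin_le_two_mul_sin_mul {a φ : ℝ} (ha : 0 ≤ a) (hφ : φ ∈ Set.Icc 0 (Real.pi / 2))
    (h : a * Real.sin φ ≤ 1) : a * Real.sin φ ≤ 2 * Real.sin (a * φ) := by
  have := Real.pi_pos
  have hjordan : a * (2 / Real.pi * φ) ≤ a * Real.sin φ :=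
    mul_le_mul_of_nonneg_left (Real.mul_le_sin hφ.1 hφ.2) ha
  have haφ : a * φ ≤ Real.pi / 2 := by
    calc a * φ = Real.pi / 2 * (a * (2 / Real.pi * φ)) := by field_simp
      _ ≤ Real.pi / 2 * 1 := by gcongr; exact hjordan.trans h
      _ = Real.pi / 2 := mul_one _
  calc a * Real.sin φ ≤ a * φ := by gcongr; exact Real.sin_le hφ.1
    _ = Real.pi / 4 * (4 / Real.pi * (a * φ)) := by field_simp
    _ ≤ 1 * (4 / Real.pi * (a * φ)) := by
        have := mul_nonneg ha hφ.1
        gcongr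
        linarith [Real.pi_le_four]
    _ = 2 * (2 / Real.pi * (a * φ)) := by ring
    _ ≤ 2 * Real.sin (a * φ) := by
        gcongr
        exact Real.mul_le_sin (mul_nonneg ha hφ.1) haφ

theorem half_sq_le_fejerKernel_eval {M : ℕ} {s : ℝ} (hs : s ∈ Set.Ioc (0 : ℝ) 1)
    (hMs : (M : ℝ) ^ 2 * s ≤ 1) : (M : ℝ) ^ 2 / 2 ≤ (fejerKernel M).eval s := by
  obtain ⟨φ, hφ, rfl⟩ := exists_sin_sq_eq ⟨hs.1.le, hs.2⟩
  have hsin : 0 ≤ Real.sin φ :=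
    Real.sin_nonneg_of_nonneg_of_le_pi hφ.1 (hφ.2.trans (by linarith [Real.pi_pos]))
  rw [← mul_pow, sq_le_one_iff₀ (by positivity)] at hMs
  have hsq := pow_le_pow_left₀ (by positivity) (mul_sin_le_two_mul_sin_mul M.cast_nonneg hφ hMs) 2
  refine le_of_mul_le_mul_left ?_ hs.1
  rw [sin_sq_mul_fejerKernel_eval]
  linarith

theorem integral_inv_sq_add_le {c : ℝ} (hc : 0 < c) :
    ∫ s in (0 : ℝ)..1, ((s + c) ^ 2)⁻¹ ≤ 1 / c := by
  have hpos : ∀ s ∈ Set.uIcc c (1 + c), s ≠ 0 := fun s hs => by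
    rw [Set.uIcc_of_le (by linarith)] at hs
    linarith [hs.1]
  have h0 : (0 : ℝ) ∉ Set.uIcc c (1 + c) := fun h => hpos 0 h rfl
  have hzpow : ∫ s in (0 : ℝ)..1, ((s + c) ^ 2)⁻¹ = ∫ s in c..(1 + c), s ^ (-2 : ℤ) := by
    rw [intervalIntegral.integral_comp_add_right (fun s : ℝ => (s ^ 2)⁻¹), zero_add]
    rfl
  rw [hzpow, integral_zpow (Or.inr ⟨by norm_num, h0⟩)]
  have : 0 < (1 + c)⁻¹ := by positivity
  norm_num
  linarith

/-- Split at `s = c`: beyond it `g ≤ 2 / c`, and the factor `(s g) ^ (j + 3) ≤ 2 ^ (j + 3)` leaves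
the integrable tail `(s + c) ^ (-2)`. -/
theorem pow_mul_pow_le_of_mul_le_two {s g c : ℝ} (hs : 0 ≤ s) (hg : 0 ≤ g) (hsg : s * g ≤ 2)
    (hc : 0 < c) (j e : ℕ) :
    s ^ (j + 1) * g ^ (j + 3 + e) ≤
      c * (s ^ j * g ^ (j + 3 + e)) + 4 * 2 ^ (j + 3) * (2 / c) ^ e * ((s + c) ^ 2)⁻¹ := by
  rcases le_total s c with h | h
  · have hnear : s ^ (j + 1) * g ^ (j + 3 + e) ≤ c * (s ^ j * g ^ (j + 3 + e)) := by
      rw [pow_succ', mul_assoc]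
      gcongr
    exact hnear.trans (le_add_of_nonneg_right (by positivity))
  · have hg2 : g ≤ 2 / c := by
      rw [le_div_iff₀ hc, mul_comm]
      exact (mul_le_mul_of_nonneg_right h hg).trans hsg
    refine le_trans ?_ (le_add_of_nonneg_left (by positivity))
    rw [← div_eq_mul_inv, le_div_iff₀ (by positivity)]
    calc s ^ (j + 1) * g ^ (j + 3 + e) * (s + c) ^ 2
        ≤ s ^ (j + 1) * g ^ (j + 3 + e) * (s + s) ^ 2 := by gcongr
      _ = 4 * (s * g) ^ (j + 3) * g ^ e := by ring
      _ ≤ 4 * 2 ^ (j + 3) * (2 / c) ^ e := by gcongr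

theorem unitIntegral_X_pow_succ_mul_fejerKernel_le (M j e : ℕ) {c : ℝ} (hc : 0 < c) :
    unitIntegral (X ^ (j + 1) * fejerKernel M ^ (j + 3 + e)) ≤
      c * unitIntegral (X ^ j * fejerKernel M ^ (j + 3 + e)) +
        4 * 2 ^ (j + 3) * (2 / c) ^ e * (1 / c) := by
  set A : ℝ := 4 * 2 ^ (j + 3) * (2 / c) ^ e
  have htail : IntervalIntegrable (fun s : ℝ => A * ((s + c) ^ 2)⁻¹) volume 0 1 := by
    refine (ContinuousOn.inv₀ (by fun_prop) fun s hs => ?_).intervalIntegrable.const_mul _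
    rw [Set.uIcc_of_le zero_le_one] at hs
    have := hs.1
    positivity
  have hpoly : ∀ f : ℝ[X], IntervalIntegrable (fun s => f.eval s) volume 0 1 :=
    fun f => f.continuous.intervalIntegrable _ _
  calc unitIntegral (X ^ (j + 1) * fejerKernel M ^ (j + 3 + e))
      ≤ ∫ s in (0 : ℝ)..1, (c * (X ^ j * fejerKernel M ^ (j + 3 + e)).eval s +
          A * ((s + c) ^ 2)⁻¹) := by
        refine intervalIntegral.integral_mono_on_of_le_Ioo zero_le_one (hpoly _)
          (((hpoly _).const_mul c).add htail) fun s hs => ?_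
        simp only [eval_mul, eval_pow, eval_X]
        exact pow_mul_pow_le_of_mul_le_two hs.1.le (fejerKernel_eval_nonneg M ⟨hs.1, hs.2.le⟩)
          (mul_fejerKernel_eval_le_two M ⟨hs.1.le, hs.2.le⟩) hc j e
    _ = c * unitIntegral (X ^ j * fejerKernel M ^ (j + 3 + e)) +
          A * ∫ s in (0 : ℝ)..1, ((s + c) ^ 2)⁻¹ := by
        rw [intervalIntegral.integral_add ((hpoly _).const_mul c) htail,
          intervalIntegral.integral_const_mul, intervalIntegral.integral_const_mul,
          unitIntegral_apply]
    _ ≤ _ := by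
        gcongr
        exact integral_inv_sq_add_le hc

theorem le_unitIntegral_X_pow_mul_fejerKernel_pow {M : ℕ} (hM : 1 ≤ M) (j r : ℕ) :
    ((M : ℝ) ^ 2 / 2) ^ r * ((1 / (M : ℝ) ^ 2) ^ (j + 1) / (j + 1)) ≤
      unitIntegral (X ^ j * fejerKernel M ^ r) := by
  set L : ℝ := (M : ℝ) ^ 2
  have hL1 : 1 ≤ L := one_le_pow₀ (by exact_mod_cast hM)
  have hδ : 1 / L ≤ 1 := (div_le_one (by linarith)).2 hL1
  calc (L / 2) ^ r * ((1 / L) ^ (j + 1) / (j + 1))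
      = ∫ s in (0 : ℝ)..(1 / L), (L / 2) ^ r * s ^ j := by
        rw [intervalIntegral.integral_const_mul, integral_pow]
        simp
    _ ≤ ∫ s in (0 : ℝ)..(1 / L), (X ^ j * fejerKernel M ^ r).eval s := by
        refine intervalIntegral.integral_mono_on_of_le_Ioo (by positivity)
          (Continuous.intervalIntegrable (by fun_prop) _ _)
          ((Polynomial.continuous _).intervalIntegrable _ _) fun s hs => ?_
        have hLs : L * s ≤ 1 := by
          rw [mul_comm, ← le_div_iff₀ (by linarith)]
          exact hs.2.le
        have hs0 := hs.1
        simp only [eval_mul, eval_pow, eval_X]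
        rw [mul_comm]
        gcongr
        exact half_sq_le_fejerKernel_eval ⟨hs.1, hs.2.le.trans hδ⟩ hLs
    _ ≤ unitIntegral (X ^ j * fejerKernel M ^ r) := by
        refine intervalIntegral.integral_mono_interval le_rfl (by positivity) hδ ?_
          ((Polynomial.continuous _).intervalIntegrable _ _)
        refine (ae_restrict_iff' measurableSet_Ioc).2 (Filter.Eventually.of_forall fun s hs => ?_)
        have hG := fejerKernel_eval_nonneg M hs
        have hs0 := hs.1
        simp only [eval_mul, eval_pow, eval_X, Pi.zero_apply]
        positivity

theorem unitIntegral_X_pow_mul_fejerKernel_pow_pos {M : ℕ} (hM : 1 ≤ M) (j r : ℕ) :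
    0 < unitIntegral (X ^ j * fejerKernel M ^ r) := by
  refine lt_of_lt_of_le ?_ (le_unitIntegral_X_pow_mul_fejerKernel_pow hM j r)
  have : (0 : ℝ) < M := by exact_mod_cast hM
  positivity

theorem two_pow_mul_succ_le {j e : ℕ} (hje : j + 1 ≤ e) :
    2 ^ (j + 3) * 2 ^ e * (2 ^ (j + 3) * 2 ^ e * (j + 1)) ≤ 16 * 64 ^ e := by
  have hj1 : j + 1 ≤ 4 ^ e := hje.trans (Nat.lt_pow_self (by norm_num)).le
  have hj3 : 4 ^ (j + 3) ≤ 4 ^ (e + 2) := Nat.pow_le_pow_right (by norm_num) (by omega)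
  calc 2 ^ (j + 3) * 2 ^ e * (2 ^ (j + 3) * 2 ^ e * (j + 1))
      = (2 * 2) ^ (j + 3) * (2 * 2) ^ e * (j + 1) := by rw [mul_pow, mul_pow]; ring
    _ ≤ 4 ^ (e + 2) * 4 ^ e * 4 ^ e := by gcongr
    _ = 16 * (4 * 4 * 4) ^ e := by rw [mul_pow, mul_pow]; ring
    _ = 16 * 64 ^ e := by norm_num

/-- Split at `c = 64 / M ^ 2`: the tail beyond `c` is then at most `c` times the contribution of
`s ≤ 1 / M ^ 2` to the `j`-th moment. -/
theorem unitIntegral_X_pow_succ_mul_fejerKernel_pow_le {M : ℕ} (hM : 1 ≤ M) {j e : ℕ}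
    (hje : j + 1 ≤ e) :
    unitIntegral (X ^ (j + 1) * fejerKernel M ^ (j + 3 + e)) ≤
      128 / (M : ℝ) ^ 2 * unitIntegral (X ^ j * fejerKernel M ^ (j + 3 + e)) := by
  have : (0 : ℝ) < M := by exact_mod_cast hM
  have hlower := le_unitIntegral_X_pow_mul_fejerKernel_pow hM j (j + 3 + e)
  set L : ℝ := (M : ℝ) ^ 2
  have hL : 0 < L := by positivity
  have hupper := unitIntegral_X_pow_succ_mul_fejerKernel_le M j e (c := 64 / L) (by positivity)
  set μ := unitIntegral (X ^ j * fejerKernel M ^ (j + 3 + e))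
  have htail : 4 * 2 ^ (j + 3) * (2 / (64 / L)) ^ e * (1 / (64 / L)) ≤ 64 / L * μ := by
    have hnum : (2 : ℝ) ^ (j + 3) * 2 ^ e * (2 ^ (j + 3) * 2 ^ e * (j + 1)) ≤ 16 * 64 ^ e := by
      exact_mod_cast two_pow_mul_succ_le hje
    calc 4 * 2 ^ (j + 3) * (2 / (64 / L)) ^ e * (1 / (64 / L))
        = L ^ (e + 1) * (2 ^ (j + 3) * 2 ^ e) / (16 * 64 ^ e) := by
          rw [show 2 / (64 / L) = 2 * L / 64 by field_simp, div_pow, mul_pow, pow_succ L]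
          field_simp
          norm_num
      _ ≤ L ^ (e + 1) * (64 / (2 ^ (j + 3) * 2 ^ e * (j + 1))) := by
          rw [mul_div_assoc]
          refine mul_le_mul_of_nonneg_left ?_ (by positivity)
          rw [div_le_div_iff₀ (by positivity) (by positivity)]
          exact hnum.trans (le_mul_of_one_le_left (by positivity) (by norm_num))
      _ = 64 / L * ((L / 2) ^ (j + 3 + e) * ((1 / L) ^ (j + 1) / (j + 1))) := by
          simp only [div_pow, one_pow, pow_add]
          field_simp
      _ ≤ 64 / L * μ := by gcongr
  calc _ ≤ 64 / L * μ + 64 / L * μ := by linarith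
    _ = 128 / L * μ := by ring

/-! ### Peaked absolutely monotone polynomials -/

theorem AbsMono.of_iterate_derivative {S : ℝ[X]} {n k N : ℕ} (hS : AbsMono (derivative^[N] S) n k)
    (h0 : ∀ i < N, 0 ≤ (derivative^[i] S).eval (-1)) : AbsMono S (n + N) (k + N) := by
  induction N generalizing S with
  | zero => exact hS
  | succ N ih =>
    rw [Function.iterate_succ_apply] at hS
    refine (ih hS fun i hi => ?_).of_derivative (h0 0 N.succ_pos)
    simpa only [Function.iterate_succ_apply] using h0 (i + 1) (by omega)

theorem exists_iterated_antiderivative (N : ℕ) (R : ℝ[X]) (a : ℝ) :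
    ∃ S : ℝ[X], derivative^[N] S = R ∧ ∀ i < N, (derivative^[i] S).eval a = 0 := by
  induction N with
  | zero => exact ⟨R, rfl, by simp⟩
  | succ N ih =>
    obtain ⟨T, hT, hT0⟩ := ih
    obtain ⟨S, rfl, hS0⟩ := exists_antiderivative T a
    refine ⟨S, hT, fun i hi => ?_⟩
    rcases i with _ | i
    · exact hS0
    · exact hT0 i (by omega)

theorem factorial_mul_eval_one {f : ℝ[X]} {j : ℕ}
    (h0 : ∀ i < j + 1, (derivative^[i] f).eval (-1) = 0) :
    (j.factorial : ℝ) * f.eval 1 = 2 ^ (j + 1) *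
      unitIntegral ((1 - X) ^ j * (derivative^[j + 1] f).comp (C 2 * X + C (-1))) := by
  have hderiv := iterate_derivative_comp_linear f 2 (-1)
  have hone : (f.comp (C 2 * X + C (-1))).eval 1 = f.eval 1 := by norm_num [eval_comp]
  have hzero (i : ℕ) (hi : i ∈ Finset.range (j + 1)) :
      (derivative^[i] (f.comp (C 2 * X + C (-1)))).eval 0 / i.factorial = 0 := by
    rw [hderiv]
    simp [eval_comp, h0 i (Finset.mem_range.1 hi)]
  rw [← hone, eval_one_eq_sum_add_unitIntegral _ j, Finset.sum_eq_zero hzero, zero_add, hderiv,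
    mul_div_cancel₀ _ (Nat.cast_ne_zero.2 j.factorial_ne_zero), mul_left_comm,
    ← smul_eq_C_mul (2 ^ (j + 1)), map_smul, smul_eq_mul]

/-- The even power of the kernel, moved to `[-1,1]` with its peak at `1`, is nonnegative, so its
iterated antiderivative is absolutely monotone; Taylor's formula turns the derivatives of the
latter at `1` into moments of the former. -/
theorem exists_absMono_eval_one_eq_moment {M : ℕ} (hM : 1 ≤ M) (k : ℕ) :
    ∃ W : ℝ[X], AbsMono W (2 * (k + 2) * M) (k + 1) ∧ W.eval (-1) = 0 ∧
      ∀ i j, i + j = k → (j.factorial : ℝ) * (derivative^[i] W).eval 1 =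
        2 ^ (j + 1) * unitIntegral (X ^ j * fejerKernel M ^ (2 * (k + 2))) := by
  set r := 2 * (k + 2) with hr
  set R : ℝ[X] := (fejerKernel M ^ r).comp (C (-1 / 2) * X + C (1 / 2)) with hR
  have hRmono : AbsMono R (r * (M - 1)) 0 := by
    refine ⟨?_, fun i hi x _ => ?_⟩
    · calc R.natDegree
          ≤ (fejerKernel M ^ r).natDegree * (C (-1 / 2) * X + C (1 / 2) : ℝ[X]).natDegree :=
            natDegree_comp_le
        _ ≤ r * (M - 1) * 1 := Nat.mul_le_mul
            (natDegree_pow_le_of_le r (natDegree_fejerKernel_le M)) natDegree_linear_le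
        _ = r * (M - 1) := mul_one _
    · obtain rfl := Nat.le_zero.1 hi
      rw [Function.iterate_zero, id, hR, eval_comp, eval_pow, hr]
      exact (even_two_mul _).pow_nonneg _
  have hRcomp : R.comp (C 2 * X + C (-1)) = (fejerKernel M ^ r).comp (1 - X) := by
    rw [hR, comp_assoc]
    congr 1
    simp only [add_comp, mul_comp, C_comp, X_comp]
    rw [mul_add, ← mul_assoc, ← C_mul, ← C_mul, add_assoc, ← C_add]
    norm_num
    ring
  obtain ⟨W, hWR, hW0⟩ := exists_iterated_antiderivative (k + 1) R (-1)
  have hW := AbsMono.of_iterate_derivative (hWR ▸ hRmono) fun i hi => (hW0 i hi).ge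
  have hdeg : r * (M - 1) + (k + 1) ≤ r * M := by
    obtain ⟨M, rfl⟩ := Nat.exists_eq_add_of_le' hM
    rw [Nat.add_sub_cancel, mul_add]
    omega
  refine ⟨W, by simpa using hW.mono_degree hdeg, hW0 0 k.succ_pos, fun i j hij => ?_⟩
  rw [factorial_mul_eval_one fun l hl => ?_, ← Function.iterate_add_apply,
    show j + 1 + i = k + 1 by omega, hWR, hRcomp, ← unitIntegral_comp_one_sub_X (X ^ j * _)]
  · simp
  · rw [← Function.iterate_add_apply]
    exact hW0 _ (by omega)

theorem mul_eval_one_le_of_eval_one_eq_moment {W : ℝ[X]} {k M i : ℕ} (hM : 1 ≤ M) (hk : 1 ≤ k)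
    (hW : ∀ i j, i + j = k → (j.factorial : ℝ) * (derivative^[i] W).eval 1 =
      2 ^ (j + 1) * unitIntegral (X ^ j * fejerKernel M ^ (2 * (k + 2))))
    (hi : 2 * i ≤ k) :
    (k : ℝ) * M ^ 2 / 512 * (derivative^[i] W).eval 1 ≤ (derivative^[i + 1] W).eval 1 := by
  have : (0 : ℝ) < M := by exact_mod_cast hM
  obtain ⟨j, hj⟩ : ∃ j, k = i + 1 + j := Nat.exists_eq_add_of_le (by omega)
  have hmoment := unitIntegral_X_pow_succ_mul_fejerKernel_pow_le hM
    (j := j) (e := 2 * k + 1 - j) (by omega)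
  rw [show j + 3 + (2 * k + 1 - j) = 2 * (k + 2) by omega] at hmoment
  have hWi := hW i (j + 1) (by omega)
  have hWi' := hW (i + 1) j (by omega)
  rw [Nat.factorial_succ] at hWi
  push_cast at hWi
  set μ := unitIntegral (X ^ j * fejerKernel M ^ (2 * (k + 2)))
  set D := (derivative^[i] W).eval 1
  have hpos : (0 : ℝ) < j.factorial := by exact_mod_cast j.factorial_pos
  have hD : 0 ≤ D := by
    refine nonneg_of_mul_nonneg_right (hWi.trans_ge ?_) (by positivity)
    have := (unitIntegral_X_pow_mul_fejerKernel_pow_pos hM (j + 1) (2 * (k + 2))).le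
    positivity
  have hstep : (j + 1) * D ≤ 256 / (M : ℝ) ^ 2 * (derivative^[i + 1] W).eval 1 := by
    refine le_of_mul_le_mul_left ?_ hpos
    calc j.factorial * ((j + 1) * D)
        = 2 ^ (j + 1 + 1) * unitIntegral (X ^ (j + 1) * fejerKernel M ^ (2 * (k + 2))) := by
          rw [← hWi]; ring
      _ ≤ 2 ^ (j + 1 + 1) * (128 / (M : ℝ) ^ 2 * μ) := by gcongr
      _ = 256 / (M : ℝ) ^ 2 * (2 ^ (j + 1) * μ) := by ring
      _ = j.factorial * (256 / (M : ℝ) ^ 2 * (derivative^[i + 1] W).eval 1) := by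
          rw [← hWi']; ring
  have hkj : (k : ℝ) ≤ 2 * (j + 1) := by exact_mod_cast (by omega : k ≤ 2 * (j + 1))
  calc (k : ℝ) * M ^ 2 / 512 * D ≤ 2 * (j + 1) * M ^ 2 / 512 * D := by gcongr
    _ = (M : ℝ) ^ 2 / 256 * ((j + 1) * D) := by ring
    _ ≤ (M : ℝ) ^ 2 / 256 * (256 / (M : ℝ) ^ 2 * (derivative^[i + 1] W).eval 1) := by gcongr
    _ = (derivative^[i + 1] W).eval 1 := by field_simp

/-- `P` is peaked at `1` on the scale `1 / σ`: its `m`-th derivative at `1` is at least as large,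
and its `L_p` mass on `[-1,1]` at most as large, as for a function of height `P 1` and width
`1 / σ`. Such polynomials attain the Markov–Nikolskii inequality up to a constant. -/
def HasPeak (P : ℝ[X]) (p : ℝ) (m : ℕ) (σ : ℝ) : Prop :=
  0 < P.eval 1 ∧ σ ^ m * P.eval 1 ≤ (derivative^[m] P).eval 1 ∧
    σ * ∫ x in (-1 : ℝ)..1, |P.eval x| ^ p ≤ P.eval 1 ^ p

theorem HasPeak.of_le {P : ℝ[X]} {p σ σ' : ℝ} {m : ℕ} (hP : HasPeak P p m σ) (hσ' : 0 ≤ σ')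
    (h : σ' ≤ σ) : HasPeak P p m σ' := by
  obtain ⟨hpos, hderiv, hintegral⟩ := hP
  have := integral_abs_eval_rpow_nonneg P p
  exact ⟨hpos, le_trans (by gcongr) hderiv, le_trans (by gcongr) hintegral⟩

theorem HasPeak.pow {P : ℝ[X]} {p σ : ℝ} {n k m ρ : ℕ} (h : HasPeak P 1 m σ) (hP : AbsMono P n k)
    (hk : 1 ≤ k) (hm : m ≤ k) (hσ : 0 ≤ σ) (hρ : ρ ≠ 0) (hρp : 1 ≤ ρ * p) :
    HasPeak (P ^ ρ) p m σ := by
  obtain ⟨hpos, hderiv, hintegral⟩ := h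
  refine ⟨by rw [eval_pow]; positivity, ?_, ?_⟩
  · obtain ⟨s, rfl⟩ := Nat.exists_eq_succ_of_ne_zero hρ
    calc σ ^ m * (P ^ (s + 1)).eval 1 = σ ^ m * P.eval 1 * (P ^ s).eval 1 := by
          rw [pow_succ', eval_mul, mul_assoc]
      _ ≤ (derivative^[m] P).eval 1 * (P ^ s).eval 1 := by
          have : 0 ≤ (P ^ s).eval 1 := by rw [eval_pow]; positivity
          gcongr
      _ ≤ (derivative^[m] (P * P ^ s)).eval 1 :=
          hP.iterate_derivative_mul_eval_le (hP.pow s) hm (by norm_num)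
      _ = (derivative^[m] (P ^ (s + 1))).eval 1 := by rw [pow_succ']
  · have habs (x : ℝ) : |(P ^ ρ).eval x| ^ p = |P.eval x| ^ (ρ * p) := by
      rw [eval_pow, abs_pow, ← Real.rpow_natCast, ← Real.rpow_mul (abs_nonneg _)]
    simp only [habs]
    calc σ * ∫ x in (-1 : ℝ)..1, |P.eval x| ^ (ρ * p)
        ≤ σ * (P.eval 1 ^ (ρ * p - 1) * ∫ x in (-1 : ℝ)..1, |P.eval x| ^ (1 : ℝ)) := by
          gcongr
          exact hP.integral_rpow_le hk zero_le_one hρp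
      _ = P.eval 1 ^ (ρ * p - 1) * (σ * ∫ x in (-1 : ℝ)..1, |P.eval x| ^ (1 : ℝ)) := by ring
      _ ≤ P.eval 1 ^ (ρ * p - 1) * P.eval 1 ^ (1 : ℝ) := by gcongr
      _ = (P ^ ρ).eval 1 ^ p := by
          rw [← Real.rpow_add hpos, sub_add_cancel, eval_pow, ← Real.rpow_natCast,
            ← Real.rpow_mul hpos.le]

theorem exists_hasPeak_one {k M m : ℕ} (hk : 1 ≤ k) (hM : 1 ≤ M) (hm : 2 * m ≤ k) :
    ∃ P : ℝ[X], AbsMono P (2 * (k + 2) * M) k ∧ HasPeak P 1 m (k * M ^ 2 / 512) := by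
  obtain ⟨W, hWmono, hW0, hW⟩ := exists_absMono_eval_one_eq_moment hM k
  have hgrowth {i : ℕ} (hi : 2 * i ≤ k) :=
    mul_eval_one_le_of_eval_one_eq_moment hM hk hW hi
  have hP : AbsMono (derivative W) (2 * (k + 2) * M) k :=
    hWmono.iterate_derivative (i := 1) (by omega)
  have hpos : 0 < (derivative W).eval 1 := by
    refine pos_of_mul_pos_right ((hW 1 (k - 1) (by omega)).trans_gt ?_) (by positivity)
    have := unitIntegral_X_pow_mul_fejerKernel_pow_pos hM (k - 1) (2 * (k + 2))
    positivity
  refine ⟨derivative W, hP, hpos, ?_, ?_⟩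
  · clear hpos
    induction m with
    | zero => simp
    | succ m ih =>
      calc ((k : ℝ) * M ^ 2 / 512) ^ (m + 1) * (derivative W).eval 1
          = k * M ^ 2 / 512 * ((k * M ^ 2 / 512) ^ m * (derivative W).eval 1) := by ring
        _ ≤ k * M ^ 2 / 512 * (derivative^[m + 1] W).eval 1 := by gcongr; exact ih (by omega)
        _ ≤ (derivative^[m + 1 + 1] W).eval 1 := hgrowth hm
  · have hintegral : ∫ x in (-1 : ℝ)..1, |(derivative W).eval x| ^ (1 : ℝ) = W.eval 1 := by
      rw [← sub_zero (W.eval 1), ← hW0, ← integral_eval_derivative]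
      refine intervalIntegral.integral_congr fun x hx => ?_
      rw [Set.uIcc_of_le (by norm_num)] at hx
      simp only [Real.rpow_one, abs_of_nonneg (hP.nonneg hx)]
    rw [hintegral, Real.rpow_one]
    exact hgrowth (i := 0) (by omega)

theorem exists_hasPeak_of_degree_le {p : ℝ} {ρ n k m : ℕ} (hρ : ρ ≠ 0) (hρp : 1 ≤ ρ * p)
    (hk : 1 ≤ k) (hm : 2 * m ≤ k) (hn : ρ * (2 * (k + 2)) ≤ n) :
    ∃ P : ℝ[X], AbsMono P n k ∧ HasPeak P p m (markovScale n k / (73728 * ρ ^ 2)) := by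
  have hden : 0 < ρ * (2 * (k + 2)) := by positivity
  set M := n / (ρ * (2 * (k + 2)))
  have hM : 1 ≤ M := (Nat.one_le_div_iff hden).2 hn
  have hnM : n ≤ 12 * ρ * k * M := by
    calc n ≤ ρ * (2 * (k + 2)) * (M + 1) := (Nat.lt_mul_div_succ n hden).le
      _ ≤ ρ * (2 * (3 * k)) * (2 * M) := by gcongr <;> omega
      _ = 12 * ρ * k * M := by ring
  obtain ⟨P, hP, hPpeak⟩ := exists_hasPeak_one hk hM hm
  have hscale : markovScale n k / (73728 * ρ ^ 2) ≤ k * M ^ 2 / 512 := by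
    have : (0 : ℝ) < k := by exact_mod_cast hk
    have hsq : (n : ℝ) ^ 2 ≤ (12 * ρ * k * M) ^ 2 := by
      gcongr
      exact_mod_cast hnM
    rw [markovScale, div_div, div_le_div_iff₀ (by positivity) (by norm_num)]
    linear_combination 512 * hsq
  have hdeg : ρ * (2 * (k + 2) * M) ≤ n := by
    rw [← mul_assoc]
    exact Nat.mul_div_le n _
  exact ⟨P ^ ρ, (hP.pow ρ).mono_degree hdeg,
    (hPpeak.pow hP hk (by omega) (by positivity) hρ hρp).of_le
      (div_nonneg (markovScale_nonneg n k) (by positivity)) hscale⟩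

theorem integral_abs_X_add_one_pow_eval_rpow {p : ℝ} (hp : 0 ≤ p) (n : ℕ) :
    ∫ x in (-1 : ℝ)..1, |((X + C 1 : ℝ[X]) ^ n).eval x| ^ p = 2 ^ (n * p) * 2 / (n * p + 1) := by
  have hnp : 0 ≤ n * p := by positivity
  calc ∫ x in (-1 : ℝ)..1, |((X + C 1 : ℝ[X]) ^ n).eval x| ^ p
      = ∫ x in (-1 : ℝ)..1, (x + 1) ^ (n * p) := by
        refine intervalIntegral.integral_congr fun x hx => ?_
        rw [Set.uIcc_of_le (by norm_num)] at hx
        have hx0 : 0 ≤ x + 1 := by linarith [hx.1]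
        simp only [eval_pow, eval_add, eval_X, eval_C]
        rw [abs_of_nonneg (by positivity), ← Real.rpow_natCast, ← Real.rpow_mul hx0]
    _ = ∫ x in (0 : ℝ)..2, x ^ (n * p) := by
        rw [intervalIntegral.integral_comp_add_right (fun x : ℝ => x ^ (n * p)) 1]
        norm_num
    _ = 2 ^ (n * p) * 2 / (n * p + 1) := by
        rw [integral_rpow (Or.inl (by linarith)), Real.zero_rpow (by positivity), sub_zero,
          Real.rpow_add_one two_ne_zero]

theorem hasPeak_X_add_one_pow {p σ : ℝ} {n m : ℕ} (hp : 0 ≤ p) (hm : 2 * m ≤ n) (hσ : 0 ≤ σ)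
    (hσn : σ ≤ n / 4) (hσp : 2 * σ ≤ n * p) : HasPeak ((X + C 1) ^ n) p m σ := by
  have heval : ((X + C 1 : ℝ[X]) ^ n).eval 1 = 2 ^ n := by norm_num
  refine ⟨by rw [heval]; positivity, ?_, ?_⟩
  · have hfact : ((n : ℝ) / 2) ^ m ≤ n.descFactorial m := by
      have hhalf : (n : ℝ) / 2 ≤ ((n + 1 - m : ℕ) : ℝ) := by
        rw [div_le_iff₀ two_pos]
        exact_mod_cast (by omega : n ≤ (n + 1 - m) * 2)
      calc ((n : ℝ) / 2) ^ m ≤ ((n + 1 - m : ℕ) : ℝ) ^ m := by gcongr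
        _ ≤ n.descFactorial m := by exact_mod_cast Nat.pow_sub_le_descFactorial n m
    calc σ ^ m * ((X + C 1 : ℝ[X]) ^ n).eval 1 = σ ^ m * (2 ^ m * 2 ^ (n - m)) := by
          rw [heval, ← pow_add, Nat.add_sub_cancel' (by omega)]
      _ ≤ (n / 4) ^ m * (2 ^ m * 2 ^ (n - m)) := by gcongr
      _ = (n / 2) ^ m * 2 ^ (n - m) := by
          rw [← mul_assoc, ← mul_pow]
          congr 2
          ring
      _ ≤ n.descFactorial m * 2 ^ (n - m) := by gcongr
      _ = (derivative^[m] ((X + C 1 : ℝ[X]) ^ n)).eval 1 := by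
          rw [iterate_derivative_X_add_pow]
          norm_num
  · rw [integral_abs_X_add_one_pow_eval_rpow hp, heval, ← Real.rpow_natCast 2 n,
      ← Real.rpow_mul two_pos.le, mul_div_assoc, mul_left_comm]
    refine mul_le_of_le_one_right (by positivity) ?_
    rw [mul_div_assoc', div_le_one (by positivity)]
    linarith

theorem hasPeak_X_add_one_pow_of_lt_degree {p : ℝ} {ρ n k m : ℕ} (hρp : 1 ≤ ρ * p) (hk : 1 ≤ k)
    (hkn : k ≤ n) (hm : 2 * m ≤ k) (hn : n < ρ * (2 * (k + 2))) :
    HasPeak ((X + C 1) ^ n) p m (markovScale n k / (73728 * ρ ^ 2)) := by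
  have hρ : (1 : ℝ) ≤ ρ := by
    exact_mod_cast Nat.one_le_iff_ne_zero.2 (by rintro rfl; omega)
  have hp : 0 < p := pos_of_mul_pos_right (one_pos.trans_le hρp) (by linarith)
  have hscale : markovScale n k ≤ 6 * ρ * n := by
    have hnk : (n : ℝ) ≤ 6 * ρ * k := by
      exact_mod_cast hn.le.trans <| (show ρ * (2 * (k + 2)) ≤ ρ * (2 * (3 * k)) by
        gcongr; omega).trans_eq (by ring)
    rw [markovScale, div_le_iff₀ (by exact_mod_cast hk), sq]
    linarith [mul_le_mul_of_nonneg_right hnk n.cast_nonneg]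
  have hσ : markovScale n k / (73728 * ρ ^ 2) ≤ (n : ℝ) / ρ / 4 := by
    calc markovScale n k / (73728 * ρ ^ 2) ≤ 6 * ρ * n / (24 * ρ ^ 2) := by gcongr; norm_num
      _ = (n : ℝ) / ρ / 4 := by field_simp; ring
  refine hasPeak_X_add_one_pow hp.le (hm.trans hkn)
    (div_nonneg (markovScale_nonneg n k) (by positivity)) (hσ.trans ?_) ?_
  · gcongr
    exact div_le_self n.cast_nonneg hρ
  · have hnp : (n : ℝ) / ρ ≤ n * p := by
      rw [div_le_iff₀ (by linarith), mul_assoc, mul_comm p]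
      exact le_mul_of_one_le_right n.cast_nonneg hρp
    have : 0 ≤ (n : ℝ) / ρ := by positivity
    linarith

theorem exists_hasPeak {p : ℝ} (hp : 0 < p) (m : ℕ) :
    ∃ c : ℝ, 0 < c ∧ ∀ {n k : ℕ}, 1 ≤ k → k ≤ n → 2 * m ≤ k →
      ∃ P : ℝ[X], AbsMono P n k ∧ HasPeak P p m (c * markovScale n k) := by
  set ρ := ⌈1 / p⌉₊
  have hρ : 0 < ρ := Nat.ceil_pos.2 (by positivity)
  have hρp : 1 ≤ ρ * p := (div_le_iff₀ hp).1 (Nat.le_ceil (1 / p))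
  refine ⟨1 / (73728 * ρ ^ 2), by positivity, fun {n k} hk hkn hm => ?_⟩
  rw [one_div_mul_eq_div]
  rcases le_or_gt (ρ * (2 * (k + 2))) n with hn | hn
  · exact exists_hasPeak_of_degree_le hρ.ne' hρp hk hm hn
  · exact ⟨(X + C 1) ^ n, by simpa using (AbsMono.X_add_one k).pow n,
      hasPeak_X_add_one_pow_of_lt_degree hρp hk hkn hm hn⟩

/-! ### The lower bound -/

theorem HasPeak.rpow_mul_Lnorm_le {P : ℝ[X]} {p : ENNReal} {m : ℕ} {σ : ℝ}
    (h : HasPeak P p.toReal m σ) (hp : 0 < p.toReal) (hσ : 0 ≤ σ) :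
    σ ^ (1 / p.toReal) * Lnorm (fun x => P.eval x) p (-1) 1 ≤ P.eval 1 := by
  have hN := Lnorm_nonneg (fun x => P.eval x) p (show (-1 : ℝ) ≤ 1 by norm_num)
  rw [← Real.rpow_le_rpow_iff (by positivity) h.1.le hp, Real.mul_rpow (by positivity) hN,
    Lnorm_rpow_toReal _ hp (by norm_num), one_div, Real.rpow_inv_rpow hσ hp.ne']
  exact h.2.2

theorem exists_le_eval_one_of_Lnorm {p : ENNReal} (hp : 0 < p) (m : ℕ) :
    ∃ c : ℝ, 0 < c ∧ ∀ {n k : ℕ}, 1 ≤ k → k ≤ n → 2 * m ≤ k →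
      ∃ P : ℝ[X], AbsMono P n k ∧ 0 < P.eval 1 ∧
        (c * markovScale n k) ^ m * P.eval 1 ≤ (derivative^[m] P).eval 1 ∧
        (c * markovScale n k) ^ (1 / p.toReal) * Lnorm (fun x => P.eval x) p (-1) 1 ≤
          P.eval 1 := by
  rcases eq_or_ne p ⊤ with rfl | hpt
  · obtain ⟨c, hc, hpeak⟩ := exists_hasPeak one_pos m
    refine ⟨c, hc, fun hk hkn hm => ?_⟩
    obtain ⟨P, hP, hpos, hderiv, -⟩ := hpeak hk hkn hm
    exact ⟨P, hP, hpos, hderiv, by simp [hP.Lnorm_top hk]⟩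
  · have hp0 : 0 < p.toReal := ENNReal.toReal_pos hp.ne' hpt
    obtain ⟨c, hc, hpeak⟩ := exists_hasPeak hp0 m
    refine ⟨c, hc, fun {n k} hk hkn hm => ?_⟩
    obtain ⟨P, hP, hPpeak⟩ := hpeak hk hkn hm
    exact ⟨P, hP, hPpeak.1, hPpeak.2.1,
      hPpeak.rpow_mul_Lnorm_le hp0 (mul_nonneg hc.le (markovScale_nonneg n k))⟩

theorem exists_iterate_derivative_eval_one_le_Lnorm {q : ENNReal} (hq : 0 < q) (m : ℕ) :
    ∃ C : ℝ, 0 < C ∧ ∀ {n k : ℕ} {P : ℝ[X]}, 1 ≤ k → k ≤ n → 2 * m ≤ k → AbsMono P n k →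
      (derivative^[m] P).eval 1 ≤ C * markovScale n k ^ (1 / q.toReal) *
        Lnorm (fun x => (derivative^[m] P).eval x) q (-1) 1 := by
  obtain ⟨B, hB, hle_Lnorm⟩ := exists_eval_one_le_Lnorm hq
  refine ⟨B * 2 ^ (1 / q.toReal), by positivity, fun {n k P} hk hkn hm hP => ?_⟩
  have hscale := markovScale_nonneg n k
  have hshift : markovScale n (k - m) ^ (1 / q.toReal) ≤
      2 ^ (1 / q.toReal) * markovScale n k ^ (1 / q.toReal) := by
    rw [← Real.mul_rpow two_pos.le hscale]
    exact Real.rpow_le_rpow (markovScale_nonneg n _)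
      (markovScale_le_two_mul hk (by omega) (by omega)) (by positivity)
  have hE := Lnorm_nonneg (fun x => (derivative^[m] P).eval x) q (show (-1 : ℝ) ≤ 1 by norm_num)
  refine (hle_Lnorm (by omega) (by omega) (hP.iterate_derivative (i := m) (by omega))).trans ?_
  rw [mul_assoc B (2 ^ _)]
  gcongr

theorem exists_le_Lnorm_iterate_derivative {p q : ENNReal} (hp : 0 < p) (hq : 0 < q) (m : ℕ) :
    ∃ c : ℝ, 0 < c ∧ ∀ {n k : ℕ}, 1 ≤ k → k ≤ n → 2 * m ≤ k →
      ∃ P : ℝ[X], AbsMono P n k ∧ 0 < Lnorm (fun x => P.eval x) p (-1) 1 ∧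
        c * markovScale n k ^ ((m : ℝ) + 1 / p.toReal - 1 / q.toReal) *
            Lnorm (fun x => P.eval x) p (-1) 1 ≤
          Lnorm (fun x => (derivative^[m] P).eval x) q (-1) 1 := by
  obtain ⟨c, hc, hpeak⟩ := exists_le_eval_one_of_Lnorm hp m
  obtain ⟨A, hA, hle_Lnorm⟩ := exists_eval_one_le_Lnorm hp
  obtain ⟨B, hB, hderiv_le_Lnorm⟩ := exists_iterate_derivative_eval_one_le_Lnorm hq m
  refine ⟨c ^ m * c ^ (1 / p.toReal) / B, by positivity, fun {n k} hk hkn hm => ?_⟩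
  obtain ⟨P, hP, hpos, hderiv, hnorm⟩ := hpeak hk hkn hm
  have hscale := markovScale_pos hk hkn
  refine ⟨P, hP, pos_of_mul_pos_right (hpos.trans_le (hle_Lnorm hk hkn hP)) (by positivity), ?_⟩
  have hderiv_le := hderiv_le_Lnorm hk hkn hm hP
  set ν := markovScale n k
  set N := Lnorm (fun x => P.eval x) p (-1) 1
  set E := Lnorm (fun x => (derivative^[m] P).eval x) q (-1) 1
  have hchain : (c * ν) ^ m * ((c * ν) ^ (1 / p.toReal) * N) ≤ B * ν ^ (1 / q.toReal) * E :=
    (mul_le_mul_of_nonneg_left hnorm (by positivity)).trans (hderiv.trans hderiv_le)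
  calc c ^ m * c ^ (1 / p.toReal) / B * ν ^ ((m : ℝ) + 1 / p.toReal - 1 / q.toReal) * N
      = (c * ν) ^ m * ((c * ν) ^ (1 / p.toReal) * N) / (B * ν ^ (1 / q.toReal)) := by
        rw [Real.rpow_sub hscale, Real.rpow_add hscale, Real.rpow_natCast, mul_pow,
          Real.mul_rpow hc.le hscale.le]
        field_simp
    _ ≤ E := (div_le_iff₀ (by positivity)).2 (hchain.trans_eq (mul_comm _ _))

/-- Erdélyi's theorem: for `0 < p ≤ q ≤ ∞`, `0 ≤ m ≤ k/2`, `1 ≤ k ≤ n`,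
`M_{q,p}^{(k)}(n,m) ≍ (n²/k)^(m + 1/p - 1/q)` (convention `1/∞ = 0`). -/
theorem stmt18 (p q : ENNReal) (hp : 0 < p) (hpq : p ≤ q) (m : ℕ) :
    ∃ c C : ℝ, 0 < c ∧ 0 < C ∧ ∀ n k : ℕ, 1 ≤ k → k ≤ n → 2 * m ≤ k →
      c * ((n : ℝ) ^ 2 / (k : ℝ)) ^ ((m : ℝ) + 1 / p.toReal - 1 / q.toReal) ≤
          Mconstr q p n k m ∧
        Mconstr q p n k m ≤
          C * ((n : ℝ) ^ 2 / (k : ℝ)) ^ ((m : ℝ) + 1 / p.toReal - 1 / q.toReal) := by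
  obtain ⟨c, hc, hlower⟩ := exists_le_Lnorm_iterate_derivative hp (hp.trans_le hpq) m
  obtain ⟨C, hC, hupper⟩ := exists_Lnorm_iterate_derivative_le_Lnorm hp hpq m
  refine ⟨c, C, hc, hC, fun n k hk hkn hm => ?_⟩
  obtain ⟨P, hP, hPpos, hPle⟩ := hlower hk hkn hm
  have hbound : C * ((n : ℝ) ^ 2 / (k : ℝ)) ^ ((m : ℝ) + 1 / p.toReal - 1 / q.toReal) ∈
      upperBounds {r : ℝ | ∃ P : ℝ[X], AbsMono P n k ∧
        0 < Lnorm (fun x => P.eval x) p (-1) 1 ∧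
        r = Lnorm (fun x => (derivative^[m] P).eval x) q (-1) 1 /
              Lnorm (fun x => P.eval x) p (-1) 1} := by
    rintro _ ⟨Q, hQ, hQpos, rfl⟩
    exact (div_le_iff₀ hQpos).2 (hupper hk hkn hm hQ)
  exact ⟨((le_div_iff₀ hPpos).2 hPle).trans (le_csSup ⟨_, hbound⟩ ⟨P, hP, hPpos, rfl⟩),
    csSup_le ⟨_, P, hP, hPpos, rfl⟩ hbound⟩
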